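/- arXiv:math-ph/0010019 — 4 statements merged into one kernel-verified Lean document; each statement's English description precedes it below -/
import Mathlib

section
/- (Lemma 4.4) Fix an integer d ≥ 1, m > 0 and x, y ∈ ℝ^d with x ≠ y. The family of finite measures {V'_{x,y,a} : 0 < a < 1, x − y ∈ aℤ^d} on Ω(x,y) is tight: for every η > 0 there exists a compact set K ⊆ Ω(x,y) such that V'_{x,y,a}(Ω(x,y) ∖ K) < η for all 0 < a < 1 with x − y ∈ aℤ^d. -/
open MeasureTheory Filter Topology Real Set
open scoped RealInnerProductSpace ENNReal unitInterval

noncomputable section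

/-- `ℝ^d` as a Euclidean space. -/
abbrev Ed (d : ℕ) := EuclideanSpace ℝ (Fin d)

/-- The space of continuous paths `[0,1] → ℝ^d`, with the uniform metric. -/
abbrev PathSp (d : ℕ) := C(unitInterval, Ed d)

instance (d : ℕ) : MeasurableSpace (PathSp d) := borel _
instance (d : ℕ) : BorelSpace (PathSp d) := ⟨rfl⟩

/-- Evaluation of a path at a real time, clamped to `[0,1]`. -/
def evalAt {d : ℕ} (ω : PathSp d) (t : ℝ) : Ed d := ω (Set.projIcc 0 1 zero_le_one t)

/-- `Ω(x)`: continuous paths starting at `x`. -/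
abbrev Omega1 {d : ℕ} (x : Ed d) := {ω : PathSp d // ω 0 = x}

/-- `Ω(x,y)`: continuous paths from `x` to `y`. -/
abbrev Omega2 {d : ℕ} (x y : Ed d) := {ω : PathSp d // ω 0 = x ∧ ω 1 = y}

/-- clamp a real number to `[0,1]`. -/
def clamp01 (r : ℝ) : ℝ := min 1 (max 0 r)

lemma clamp01_of_nonpos {r : ℝ} (h : r ≤ 0) : clamp01 r = 0 := by
  rw [clamp01, max_eq_left h, min_eq_right zero_le_one]

lemma clamp01_of_one_le {r : ℝ} (h : 1 ≤ r) : clamp01 r = 1 := by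
  rw [clamp01, max_eq_right (zero_le_one.trans h), min_eq_left h]

lemma clamp01_continuous : Continuous clamp01 :=
  continuous_const.min (continuous_const.max continuous_id)

/-- The piecewise linear path starting at `x` with `N` steps given by the increments `v i`,
the `i`-th step being linearly parametrized by `[i/N, (i+1)/N]`. -/
def pwLinE {d : ℕ} (x : Ed d) (N : ℕ) (v : Fin N → Ed d) : PathSp d :=
  ⟨fun t => x + ∑ i : Fin N, clamp01 ((N : ℝ) * (t : ℝ) - ((i : ℕ) : ℝ)) • v i, by
    refine continuous_const.add (continuous_finset_sum _ fun i _ => ?_)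
    exact ((clamp01_continuous.comp
      ((continuous_const.mul continuous_subtype_val).sub continuous_const)).smul
      continuous_const)⟩

lemma pwLinE_zero {d : ℕ} (x : Ed d) (N : ℕ) (v : Fin N → Ed d) :
    pwLinE x N v 0 = x := by
  show x + ∑ i : Fin N, clamp01 ((N : ℝ) * ((0 : unitInterval) : ℝ) - ((i : ℕ) : ℝ)) • v i = x
  have h : ∀ i : Fin N, clamp01 ((N : ℝ) * ((0 : unitInterval) : ℝ) - ((i : ℕ) : ℝ)) = 0 := by
    intro i
    apply clamp01_of_nonpos
    have h0 : ((0 : unitInterval) : ℝ) = 0 := rfl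
    rw [h0, mul_zero, zero_sub]
    exact neg_nonpos.mpr (Nat.cast_nonneg (i : ℕ))
  simp only [h, zero_smul, Finset.sum_const_zero, add_zero]

lemma pwLinE_one {d : ℕ} (x : Ed d) (N : ℕ) (v : Fin N → Ed d) :
    pwLinE x N v 1 = x + ∑ i : Fin N, v i := by
  show x + ∑ i : Fin N, clamp01 ((N : ℝ) * ((1 : unitInterval) : ℝ) - ((i : ℕ) : ℝ)) • v i
      = x + ∑ i : Fin N, v i
  have h : ∀ i : Fin N, clamp01 ((N : ℝ) * ((1 : unitInterval) : ℝ) - ((i : ℕ) : ℝ)) = 1 := by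
    intro i
    apply clamp01_of_one_le
    have h1 : ((1 : unitInterval) : ℝ) = 1 := rfl
    have h2 : ((i : ℕ) : ℝ) + 1 ≤ (N : ℝ) := by
      exact_mod_cast Nat.succ_le_of_lt i.isLt
    rw [h1, mul_one]; linarith
  simp only [h, one_smul]

/-- Piecewise linear element of `Ω(x)` with increments `v`. -/
def pwLin1 {d : ℕ} (x : Ed d) (N : ℕ) (v : Fin N → Ed d) : Omega1 x :=
  ⟨pwLinE x N v, pwLinE_zero x N v⟩

/-- Piecewise linear element of `Ω(x,y)` with increments `v` summing to `y - x`. -/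
def pwLin2 {d : ℕ} (x y : Ed d) (N : ℕ) (v : Fin N → Ed d)
    (h : x + ∑ i : Fin N, v i = y) : Omega2 x y :=
  ⟨pwLinE x N v, pwLinE_zero x N v, by rw [pwLinE_one, h]⟩

/-- the point preceding `x_i` in the list `x, x_1, …, x_N`. -/
def prevPt {d : ℕ} (x : Ed d) {N : ℕ} (xs : Fin N → Ed d) (i : Fin N) : Ed d :=
  if (i : ℕ) = 0 then x else xs ⟨(i : ℕ) - 1, lt_of_le_of_lt (Nat.pred_le _) i.isLt⟩

/-- The discrete measure `W_{x,a,N}`, i.e. the measure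
`∏_{i=1}^N (2πa²)^{-d/2} exp(-|x_i - x_{i-1}|²/(2a²)) dx_1 … dx_N` (with `x_0 = x`)
on `N`-step piecewise linear paths, placed on `{a²N} × Ω(x) ⊆ ℝ × Ω(x)`.
For `N = 0` this is the Dirac measure at `(0, constant path at x)`. -/
def WxaN {d : ℕ} (x : Ed d) (a : ℝ) (N : ℕ) : Measure (ℝ × Omega1 x) :=
  Measure.map
    (fun xs : Fin N → Ed d =>
      ((a ^ 2 * N : ℝ), pwLin1 x N fun i => xs i - prevPt x xs i))
    (volume.withDensity fun xs : Fin N → Ed d =>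
      ENNReal.ofReal (∏ i : Fin N,
        (2 * π * a ^ 2) ^ (-(d : ℝ) / 2) *
          Real.exp (-‖xs i - prevPt x xs i‖ ^ 2 / (2 * a ^ 2))))

/-- The approximating probability measure
`W_{x,a} = (1 - e^{-m²a²/2}) Σ_{N=0}^∞ e^{-m²a²N/2} W_{x,a,N}`. -/
def Wxa {d : ℕ} (x : Ed d) (m a : ℝ) : Measure (ℝ × Omega1 x) :=
  ENNReal.ofReal (1 - Real.exp (-m ^ 2 * a ^ 2 / 2)) •
    Measure.sum fun N : ℕ =>
      ENNReal.ofReal (Real.exp (-m ^ 2 * a ^ 2 * N / 2)) • WxaN x a N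

/-- The lattice step of length `a` in direction `p.1`, forwards or backwards
according to `p.2`. -/
def stepVec {d : ℕ} (a : ℝ) (p : Fin d × Bool) : Ed d :=
  (if p.2 then a else -a) • EuclideanSpace.single p.1 (1 : ℝ)

/-- The normalized counting measure `V'_{x,a,N}` giving mass `(2d)^{-N}` to each
(piecewise linearly parametrized) `N`-step nearest-neighbour lattice path in `x + aℤ^d`
starting at `x`.  For `N = 0` it is the Dirac measure at the constant path. -/
def VxaN {d : ℕ} (x : Ed d) (a : ℝ) (N : ℕ) : Measure (Omega1 x) :=
  Measure.sum fun s : Fin N → Fin d × Bool =>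
    (((2 * d : ℕ) : ℝ≥0∞) ^ N)⁻¹ •
      Measure.dirac (pwLin1 x N fun i => stepVec a (s i))

/-- The approximating probability measure
`V'_{x,a} = (1 - e^{-m²a²/(2d)}) Σ_{N=0}^∞ e^{-m²a²N/(2d)} V'_{x,a,N}`. -/
def Vxa {d : ℕ} (x : Ed d) (m a : ℝ) : Measure (Omega1 x) :=
  ENNReal.ofReal (1 - Real.exp (-m ^ 2 * a ^ 2 / (2 * d))) •
    Measure.sum fun N : ℕ =>
      ENNReal.ofReal (Real.exp (-m ^ 2 * a ^ 2 * N / (2 * d))) • VxaN x a N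

/-- `Wt` is the family of Wiener measures `(W_x^t)_{t>0}` on `Ω(x)`:
each `W_x^t` is a Borel probability measure, characterized by the characteristic
functions of its finite dimensional distributions
`∫ exp(i Σ_j ξ_j·ω(t_j)) dW_x^t = exp(-(t/2) Σ_j (t_j - t_{j-1}) |ξ_j + ⋯ + ξ_n|²
+ i x·(ξ_1 + ⋯ + ξ_n))` for all `0 = t_0 < t_1 < ⋯ < t_n ≤ 1`. -/
def IsWienerFamily {d : ℕ} (x : Ed d) (Wt : ℝ → Measure (Omega1 x)) : Prop :=
  ∀ t : ℝ, 0 < t → (IsProbabilityMeasure (Wt t) ∧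
    ∀ (n : ℕ) (ts : ℕ → ℝ), ts 0 = 0 → (∀ i < n, ts i < ts (i + 1)) → ts n ≤ 1 →
      ∀ ξ : Fin n → Ed d,
        (∫ ω : Omega1 x, Complex.exp (Complex.I *
            ((∑ i : Fin n, ⟪ξ i, evalAt ω.1 (ts ((i : ℕ) + 1))⟫ : ℝ) : ℂ)) ∂(Wt t))
          = Complex.exp
              (((-(t / 2) * ∑ i : Fin n,
                  (ts ((i : ℕ) + 1) - ts (i : ℕ)) * ‖∑ j ∈ Finset.Ici i, ξ j‖ ^ 2 : ℝ) : ℂ)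
                + Complex.I * ((⟪∑ j, ξ j, x⟫ : ℝ) : ℂ)))


/-- the sequence of points `x, vs 0, …, vs (N-1), y` (with value `y` from index `N+1` on). -/
def pinPts {d : ℕ} (x y : Ed d) {N : ℕ} (vs : Fin N → Ed d) (j : ℕ) : Ed d :=
  if h0 : j = 0 then x else if h : j ≤ N then vs ⟨j - 1, by omega⟩ else y

lemma pinPts_zero {d : ℕ} (x y : Ed d) {N : ℕ} (vs : Fin N → Ed d) :
    pinPts x y vs 0 = x := by simp [pinPts]

lemma pinPts_last {d : ℕ} (x y : Ed d) {N : ℕ} (vs : Fin N → Ed d) :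
    pinPts x y vs (N + 1) = y := by
  have h1 : ¬(N + 1 = 0) := Nat.succ_ne_zero N
  have h2 : ¬(N + 1 ≤ N) := by omega
  simp [pinPts, h1, h2]

lemma pin_telescope {d : ℕ} (x y : Ed d) {N : ℕ} (vs : Fin N → Ed d) :
    x + ∑ i : Fin (N + 1), (pinPts x y vs ((i : ℕ) + 1) - pinPts x y vs (i : ℕ)) = y := by
  rw [Fin.sum_univ_eq_sum_range (fun j => pinPts x y vs (j + 1) - pinPts x y vs j) (N + 1)]
  rw [Finset.sum_range_sub (fun j => pinPts x y vs j) (N + 1)]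
  rw [pinPts_zero, pinPts_last]
  abel

/-- The discrete measure `W_{x,y,a,N+1}`, i.e. the measure
`∏_{i=1}^{N+1} (2πa²)^{-d/2} exp(-|x_i - x_{i-1}|²/(2a²)) dx_1 … dx_N`
(with `x_0 = x`, `x_{N+1} = y`) on `(N+1)`-step piecewise linear paths from `x` to `y`,
placed on `{a²(N+1)} × Ω(x,y) ⊆ ℝ × Ω(x,y)`.  For `N = 0` this is the point mass of
weight `(2πa²)^{-d/2} e^{-|x-y|²/(2a²)}` at `(a², linear path from x to y)`. -/
def WxyaN {d : ℕ} (x y : Ed d) (a : ℝ) (N : ℕ) : Measure (ℝ × Omega2 x y) :=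
  Measure.map
    (fun vs : Fin N → Ed d =>
      ((a ^ 2 * (N + 1) : ℝ),
        pwLin2 x y (N + 1) (fun i => pinPts x y vs ((i : ℕ) + 1) - pinPts x y vs (i : ℕ))
          (pin_telescope x y vs)))
    (volume.withDensity fun vs : Fin N → Ed d =>
      ENNReal.ofReal (∏ i : Fin (N + 1),
        (2 * π * a ^ 2) ^ (-(d : ℝ) / 2) *
          Real.exp (-‖pinPts x y vs ((i : ℕ) + 1) - pinPts x y vs (i : ℕ)‖ ^ 2 /
            (2 * a ^ 2))))

/-- The approximating measure
`W_{x,y,a} = (1 - e^{-m²a²/2}) Σ_{N=1}^∞ e^{-m²a²N/2} W_{x,y,a,N}`. -/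
def Wxya {d : ℕ} (x y : Ed d) (m a : ℝ) : Measure (ℝ × Omega2 x y) :=
  ENNReal.ofReal (1 - Real.exp (-m ^ 2 * a ^ 2 / 2)) •
    Measure.sum fun N : ℕ =>
      ENNReal.ofReal (Real.exp (-m ^ 2 * a ^ 2 * (N + 1) / 2)) • WxyaN x y a N

/-- The measure `V'_{x,y,a,N}` giving mass `a^{-d} (2d)^{-N}` to each
(piecewise linearly parametrized) `N`-step nearest-neighbour lattice path
in `x + aℤ^d` from `x` to `y`. -/
def VxyaN {d : ℕ} (x y : Ed d) (a : ℝ) (N : ℕ) : Measure (Omega2 x y) :=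
  Measure.sum fun s : {s : Fin N → Fin d × Bool // x + ∑ i, stepVec a (s i) = y} =>
    (ENNReal.ofReal (a ^ (-(d : ℝ))) * (((2 * d : ℕ) : ℝ≥0∞) ^ N)⁻¹) •
      Measure.dirac (pwLin2 x y N (fun i => stepVec a (s.1 i)) s.2)

/-- The approximating measure
`V'_{x,y,a} = (1 - e^{-m²a²/(2d)}) Σ_{N=1}^∞ e^{-m²a²N/(2d)} V'_{x,y,a,N}`. -/
def Vxya {d : ℕ} (x y : Ed d) (m a : ℝ) : Measure (Omega2 x y) :=
  ENNReal.ofReal (1 - Real.exp (-m ^ 2 * a ^ 2 / (2 * d))) •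
    Measure.sum fun N : ℕ =>
      ENNReal.ofReal (Real.exp (-m ^ 2 * a ^ 2 * (N + 1) / (2 * d))) • VxyaN x y a (N + 1)

/-- `Wt` is the family of pinned Wiener measures `(W_{x,y}^t)_{t>0}` on `Ω(x,y)`:
finite Borel measures characterized by the characteristic functions of their finite
dimensional distributions: for `0 = t_0 < t_1 < ⋯ < t_n < 1`, with `η_i = ξ_i + ⋯ + ξ_n`,
`∫ exp(i Σ_j ξ_j·ω(t_j)) dW_{x,y}^t = (2πt)^{-d/2} e^{-|x-y|²/(2t)} ·
exp(-(t/2)(Σ_j (t_j - t_{j-1})|η_j|² - |Σ_j t_j ξ_j|²) + i Σ_j ((1-t_j)x + t_j y)·ξ_j)`;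
in particular (`n = 0`) the total mass is the heat kernel `(2πt)^{-d/2} e^{-|x-y|²/(2t)}`. -/
def IsPinnedWienerFamily {d : ℕ} (x y : Ed d) (Wt : ℝ → Measure (Omega2 x y)) : Prop :=
  ∀ t : ℝ, 0 < t → (IsFiniteMeasure (Wt t) ∧
    ∀ (n : ℕ) (ts : ℕ → ℝ), ts 0 = 0 → (∀ i < n, ts i < ts (i + 1)) → ts n < 1 →
      ∀ ξ : Fin n → Ed d,
        (∫ ω : Omega2 x y, Complex.exp (Complex.I *
            ((∑ i : Fin n, ⟪ξ i, evalAt ω.1 (ts ((i : ℕ) + 1))⟫ : ℝ) : ℂ)) ∂(Wt t))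
          = (((2 * π * t) ^ (-(d : ℝ) / 2) * Real.exp (-‖x - y‖ ^ 2 / (2 * t)) : ℝ) : ℂ) *
            Complex.exp
              (((-(t / 2) *
                  ((∑ i : Fin n,
                      (ts ((i : ℕ) + 1) - ts (i : ℕ)) * ‖∑ j ∈ Finset.Ici i, ξ j‖ ^ 2)
                    - ‖∑ i : Fin n, ts ((i : ℕ) + 1) • ξ i‖ ^ 2) : ℝ) : ℂ)
                + Complex.I *
                  ((∑ i : Fin n,
                    ⟪ξ i, (1 - ts ((i : ℕ) + 1)) • x + ts ((i : ℕ) + 1) • y⟫ : ℝ) : ℂ)))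

/-- Chaining: small increments over dyadic intervals control the distance to dyadic
approximations from below. -/
lemma abs_sub_dyadic_floor_le {f : ℝ → ℝ} {R : ℝ}
    (h : ∀ r i : ℕ, 1 ≤ r →
      |f (((i + 1 : ℕ) : ℝ) / 2 ^ r) - f ((i : ℝ) / 2 ^ r)| ≤ R * (9 / 10) ^ r)
    (t : ℝ) (n k : ℕ) :
    |f ((⌊t * 2 ^ (n + k)⌋₊ : ℝ) / 2 ^ (n + k)) - f ((⌊t * 2 ^ n⌋₊ : ℝ) / 2 ^ n)|
      ≤ 9 * R * ((9 / 10) ^ n - (9 / 10) ^ (n + k)) := by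
  induction k with
  | zero => simp
  | succ k ih =>
    have hR : 0 ≤ R * (9 / 10) ^ (n + k + 1) :=
      (abs_nonneg _).trans (h (n + k + 1) 0 (by omega))
    have key : |f ((⌊t * 2 ^ (n + k + 1)⌋₊ : ℝ) / 2 ^ (n + k + 1))
        - f ((⌊t * 2 ^ (n + k)⌋₊ : ℝ) / 2 ^ (n + k))| ≤ R * (9 / 10) ^ (n + k + 1) := by
      set q := ⌊t * 2 ^ (n + k)⌋₊ with hq
      have hdiv : ⌊t * 2 ^ (n + k + 1)⌋₊ / 2 = q := by
        rw [← Nat.floor_div_natCast, hq]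
        congr 1
        push_cast
        ring
      have hqr : (q : ℝ) / 2 ^ (n + k) = ((2 * q : ℕ) : ℝ) / 2 ^ (n + k + 1) := by
        push_cast
        rw [pow_succ]
        field_simp
      rw [hqr]
      rcases Nat.even_or_odd' ⌊t * 2 ^ (n + k + 1)⌋₊ with ⟨c, hc | hc⟩
      · have : c = q := by omega
        rw [hc, this]
        simpa using hR
      · have : c = q := by omega
        rw [hc, this]
        exact h (n + k + 1) (2 * q) (by omega)
    have e : n + (k + 1) = n + k + 1 := by ring
    rw [e]
    calc _ ≤ |f ((⌊t * 2 ^ (n + k + 1)⌋₊ : ℝ) / 2 ^ (n + k + 1))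
        - f ((⌊t * 2 ^ (n + k)⌋₊ : ℝ) / 2 ^ (n + k))| + _ := abs_sub_le _ _ _
      _ ≤ _ := add_le_add key ih
      _ = _ := by rw [pow_succ]; ring

lemma abs_sub_dyadic_floor_le_limit {f : ℝ → ℝ} (hf : Continuous f) {R : ℝ}
    (h : ∀ r i : ℕ, 1 ≤ r →
      |f (((i + 1 : ℕ) : ℝ) / 2 ^ r) - f ((i : ℝ) / 2 ^ r)| ≤ R * (9 / 10) ^ r)
    {t : ℝ} (ht : 0 ≤ t) (n : ℕ) :
    |f t - f ((⌊t * 2 ^ n⌋₊ : ℝ) / 2 ^ n)| ≤ 9 * R * (9 / 10) ^ n := by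
  have hR : 0 ≤ R := by
    have := (abs_nonneg _).trans (h 1 0 le_rfl)
    linarith
  have h1 : Tendsto (fun k : ℕ => (⌊t * 2 ^ (n + k)⌋₊ : ℝ) / 2 ^ (n + k)) atTop (𝓝 t) := by
    refine (tendsto_nat_floor_mul_div_atTop ht).comp ?_
    have : Tendsto (fun k : ℕ => n + k) atTop atTop :=
      tendsto_atTop_mono (fun k => Nat.le_add_left k n) tendsto_id
    exact (tendsto_pow_atTop_atTop_of_one_lt (one_lt_two)).comp this
  refine le_of_tendsto (((hf.tendsto t).comp h1).sub_const _).abs (Eventually.of_forall fun k => ?_)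
  refine (abs_sub_dyadic_floor_le h t n k).trans ?_
  have : 0 ≤ R * (9 / 10 : ℝ) ^ (n + k) := by positivity
  linarith

/-- Uniform modulus of continuity for functions with small dyadic increments. -/
lemma abs_sub_le_of_dyadic {f : ℝ → ℝ} (hf : Continuous f) {R : ℝ}
    (h : ∀ r i : ℕ, 1 ≤ r →
      |f (((i + 1 : ℕ) : ℝ) / 2 ^ r) - f ((i : ℝ) / 2 ^ r)| ≤ R * (9 / 10) ^ r)
    {s t : ℝ} (hs : 0 ≤ s) (hst : s ≤ t) {n : ℕ} (hn : 1 ≤ n) (hd : t - s ≤ 1 / 2 ^ n) :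
    |f t - f s| ≤ 19 * R * (9 / 10) ^ n := by
  have h1 := abs_sub_dyadic_floor_le_limit hf h hs n
  have h2 := abs_sub_dyadic_floor_le_limit hf h (hs.trans hst) n
  have hR : 0 ≤ R * (9 / 10) ^ n := (abs_nonneg _).trans (h n 0 hn)
  have h3 : |f ((⌊t * 2 ^ n⌋₊ : ℝ) / 2 ^ n) - f ((⌊s * 2 ^ n⌋₊ : ℝ) / 2 ^ n)|
      ≤ R * (9 / 10) ^ n := by
    have hle : ⌊s * 2 ^ n⌋₊ ≤ ⌊t * 2 ^ n⌋₊ := Nat.floor_le_floor (by gcongr)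
    have hle' : ⌊t * 2 ^ n⌋₊ ≤ ⌊s * 2 ^ n⌋₊ + 1 := by
      rw [← Nat.floor_add_one (by positivity)]
      refine Nat.floor_le_floor ?_
      have : (t - s) * 2 ^ n ≤ 1 / 2 ^ n * 2 ^ n := by gcongr
      rw [one_div, inv_mul_cancel₀ (by positivity)] at this
      linarith
    rcases (show ⌊t * 2 ^ n⌋₊ = ⌊s * 2 ^ n⌋₊ ∨ ⌊t * 2 ^ n⌋₊ = ⌊s * 2 ^ n⌋₊ + 1 by omega)
      with e | e
    · rw [e]
      simpa using hR
    · rw [e]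
      exact h n _ hn
  rw [abs_le] at *
  constructor <;> linarith [h1.1, h1.2, h2.1, h2.2, h3.1, h3.2]

lemma clamp01_eq_sub (r : ℝ) : clamp01 r = max 0 r - max 0 (r - 1) := by
  unfold clamp01
  rcases le_total r 0 with h | h
  · rw [max_eq_left h, max_eq_left (by linarith)]; simp
  · rcases le_total r 1 with h' | h'
    · rw [max_eq_right h, max_eq_left (by linarith), min_eq_right h']; simp
    · rw [max_eq_right h, max_eq_right (by linarith), min_eq_left h']; ring

lemma clamp01_mono : Monotone clamp01 := fun _ _ h =>
  min_le_min_left _ (max_le_max_left _ h)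

lemma clamp01_nonneg (r : ℝ) : 0 ≤ clamp01 r := le_min zero_le_one (le_max_left _ _)

lemma clamp01_le_one (r : ℝ) : clamp01 r ≤ 1 := min_le_left _ _

lemma sum_clamp01 (N : ℕ) {t : ℝ} (h0 : 0 ≤ t) (h1 : t ≤ N) :
    ∑ i : Fin N, clamp01 (t - ((i : ℕ) : ℝ)) = t := by
  rw [Fin.sum_univ_eq_sum_range (fun i : ℕ => clamp01 (t - (i : ℝ)))]
  have : ∀ i : ℕ, clamp01 (t - (i : ℝ)) = max 0 (t - (i : ℝ)) - max 0 (t - ((i + 1 : ℕ) : ℝ)) := by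
    intro i
    rw [clamp01_eq_sub]
    push_cast
    ring_nf
  simp only [this]
  rw [Finset.sum_range_sub' (fun i : ℕ => max 0 (t - (i : ℝ)))]
  simp [h0, h1]

/-- The weight of the `i`-th step in the increment of a piecewise linear `N`-step path
between the times `u` and `v`. -/
def incWeight (N : ℕ) (u v : ℝ) (i : Fin N) : ℝ :=
  clamp01 ((N : ℝ) * v - ((i : ℕ) : ℝ)) - clamp01 ((N : ℝ) * u - ((i : ℕ) : ℝ))

lemma sum_sq_incWeight_le (N : ℕ) {u v : ℝ} (hu : 0 ≤ u) (huv : u ≤ v) (hv : v ≤ 1) :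
    ∑ i, incWeight N u v i ^ 2 ≤ N * (v - u) := by
  have hN : (0 : ℝ) ≤ N := Nat.cast_nonneg N
  calc ∑ i, incWeight N u v i ^ 2 ≤ ∑ i, incWeight N u v i := by
        refine Finset.sum_le_sum fun i _ => ?_
        have h0 : 0 ≤ incWeight N u v i := sub_nonneg.2 (clamp01_mono (by gcongr))
        have h1 : incWeight N u v i ≤ 1 := by
          have := clamp01_nonneg ((N : ℝ) * u - ((i : ℕ) : ℝ))
          have := clamp01_le_one ((N : ℝ) * v - ((i : ℕ) : ℝ))
          unfold incWeight
          linarith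
        nlinarith
    _ = N * (v - u) := by
        unfold incWeight
        have hv0 : 0 ≤ v := hu.trans huv
        rw [Finset.sum_sub_distrib, sum_clamp01 N (by positivity) (by nlinarith),
          sum_clamp01 N (by positivity) (by nlinarith)]
        ring

/-- At least a quarter of the steps do not contribute to an increment over at most half of the
time interval. -/
lemma card_incWeight_eq_zero (N : ℕ) {u v : ℝ} (hu : 0 ≤ u) (huv : u ≤ v) (h : v - u ≤ 1 / 2) :
    (N : ℝ) / 4 ≤ (Finset.univ.filter fun i => incWeight N u v i = 0).card + 1 := by
  have hN : (0 : ℝ) ≤ N := Nat.cast_nonneg N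
  have hsub : (Finset.univ.filter fun i => ¬ incWeight N u v i = 0).card
      ≤ (Finset.Ico ⌊(N : ℝ) * u⌋₊ ⌈(N : ℝ) * v⌉₊).card := by
    refine Finset.card_le_card_of_injOn (fun i : Fin N => (i : ℕ)) ?_ (fun i _ j _ => Fin.ext)
    intro i hi
    simp only [Finset.coe_filter, Finset.mem_univ, true_and, Set.mem_ofPred_eq] at hi
    simp only [Finset.coe_Ico, Set.mem_Ico]
    constructor
    · by_contra hlt
      refine hi ?_
      have h1 : ((i : ℕ) : ℝ) + 1 ≤ N * u := by
        have := (Nat.le_floor_iff (by positivity)).1 (Nat.succ_le_of_lt (not_le.1 hlt))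
        exact_mod_cast this
      have h2 : (N : ℝ) * u ≤ N * v := by gcongr
      unfold incWeight
      rw [clamp01_of_one_le (by linarith), clamp01_of_one_le (by linarith), sub_self]
    · by_contra hlt
      refine hi ?_
      have h1 : (N : ℝ) * v ≤ (i : ℕ) := Nat.ceil_le.1 (not_lt.1 hlt)
      have h2 : (N : ℝ) * u ≤ N * v := by gcongr
      unfold incWeight
      rw [clamp01_of_nonpos (by linarith), clamp01_of_nonpos (by linarith), sub_self]
  have hcard := Finset.card_filter_add_card_filter_not (s := Finset.univ)
    (fun i => incWeight N u v i = 0)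
  rw [Finset.card_univ, Fintype.card_fin] at hcard
  have hle : ⌊(N : ℝ) * u⌋₊ ≤ ⌈(N : ℝ) * v⌉₊ := by
    have h1 : (⌊(N : ℝ) * u⌋₊ : ℝ) ≤ N * u := Nat.floor_le (by positivity)
    have h2 : (N : ℝ) * v ≤ ⌈(N : ℝ) * v⌉₊ := Nat.le_ceil _
    have h3 : (N : ℝ) * u ≤ N * v := by gcongr
    exact_mod_cast h1.trans (h3.trans h2)
  rw [Nat.card_Ico] at hsub
  have hsub' : ((Finset.univ.filter fun i => ¬ incWeight N u v i = 0).card : ℝ)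
      ≤ ⌈(N : ℝ) * v⌉₊ - ⌊(N : ℝ) * u⌋₊ := by
    rw [← Nat.cast_sub hle]
    exact_mod_cast hsub
  have h1 : (⌈(N : ℝ) * v⌉₊ : ℝ) < N * v + 1 := Nat.ceil_lt_add_one (by
    have : 0 ≤ v := hu.trans huv
    positivity)
  have h2 : (N : ℝ) * u < ⌊(N : ℝ) * u⌋₊ + 1 := Nat.lt_floor_add_one _
  have h3 : (N : ℝ) * (v - u) ≤ N * (1 / 2) := by gcongr
  have hcard' : ((Finset.univ.filter fun i => incWeight N u v i = 0).card : ℝ)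
      + (Finset.univ.filter fun i => ¬ incWeight N u v i = 0).card = N := by exact_mod_cast hcard
  have h4 : (0 : ℝ) ≤ (Finset.univ.filter fun i => incWeight N u v i = 0).card :=
    Nat.cast_nonneg _
  rcases le_total (N : ℝ) 4 with h5 | h5 <;> linarith

/-- The lattice step in direction `p.1`, forwards or backwards according to `p.2`. -/
def latStep {d : ℕ} (p : Fin d × Bool) (l : Fin d) : ℤ :=
  if p.1 = l then (if p.2 then 1 else -1) else 0

/-- Orthogonality of the characters of `ℤ / (2 * M)`. -/
lemma sum_char_eq {M : ℕ} (hM : 0 < M) (w : ℤ) :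
    ∃ r : ℝ, 0 ≤ r ∧ (w = 0 → r = 1) ∧
      ((2 * M : ℕ) : ℂ)⁻¹ * ∑ k : Fin (2 * M),
        Complex.exp (Complex.I * (((π * (k : ℕ) / M : ℝ) : ℂ) * (w : ℂ))) = (r : ℂ) := by
  have hMc : (M : ℂ) ≠ 0 := by exact_mod_cast hM.ne'
  set ζ : ℂ := Complex.exp (Complex.I * (π * w / M)) with hζ
  have hterm : ∀ k : ℕ,
      Complex.exp (Complex.I * (((π * k / M : ℝ) : ℂ) * (w : ℂ))) = ζ ^ k := by
    intro k
    rw [hζ, ← Complex.exp_nat_mul]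
    congr 1
    push_cast
    ring
  have hone : ζ ^ (2 * M) = 1 := by
    rw [hζ, ← Complex.exp_nat_mul, Complex.exp_eq_one_iff]
    refine ⟨w, ?_⟩
    push_cast
    field_simp
  simp only [hterm]
  rw [Fin.sum_univ_eq_sum_range (fun k => ζ ^ k)]
  by_cases h1 : ζ = 1
  · refine ⟨1, zero_le_one, fun _ => rfl, ?_⟩
    have : ((2 * M : ℕ) : ℂ) ≠ 0 := by exact_mod_cast (by omega : 2 * M ≠ 0)
    simp only [h1, one_pow, Finset.sum_const, Finset.card_range, nsmul_eq_mul, mul_one,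
      Complex.ofReal_one]
    exact inv_mul_cancel₀ this
  · refine ⟨0, le_rfl, fun hw => absurd ?_ h1, ?_⟩
    · rw [hζ, hw]
      simp
    · rw [geom_sum_eq h1, hone]
      simp

/-- Discrete Fourier bound for a weighted count of lattice walks with prescribed endpoint. -/
lemma sum_walks_le_fourier {d : ℕ} (N : ℕ) {M : ℕ} (hM : 0 < M) (z : Fin d → ℤ)
    (g : Fin N → Fin d × Bool → ℝ) (hg : ∀ i p, 0 ≤ g i p) :
    ∑ s ∈ Finset.univ.filter (fun s : Fin N → Fin d × Bool => ∀ l, ∑ i, latStep (s i) l = z l),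
        ∏ i, g i (s i)
      ≤ (((2 * M : ℕ) : ℝ) ^ d)⁻¹ * ∑ κ : Fin d → Fin (2 * M), ∏ i : Fin N,
        ‖∑ p : Fin d × Bool, (g i p : ℂ) *
          Complex.exp (Complex.I * ∑ l, ((π * (κ l : ℕ) / M : ℝ) : ℂ) * (latStep p l : ℂ))‖ := by
  choose r hr0 hr1 hr using sum_char_eq hM
  have hG : ∀ s : Fin N → Fin d × Bool, 0 ≤ ∏ i, g i (s i) := fun s =>
    Finset.prod_nonneg fun i _ => hg i _
  have hR : ∀ s : Fin N → Fin d × Bool, 0 ≤ ∏ l, r (∑ i, latStep (s i) l - z l) := fun s =>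
    Finset.prod_nonneg fun i _ => hr0 _
  set θ : (Fin d → Fin (2 * M)) → Fin d → ℂ := fun κ l => ((π * (κ l : ℕ) / M : ℝ) : ℂ) with hθ
  have step1 : ∑ s ∈ Finset.univ.filter
        (fun s : Fin N → Fin d × Bool => ∀ l, ∑ i, latStep (s i) l = z l), ∏ i, g i (s i)
      ≤ ∑ s : Fin N → Fin d × Bool,
        (∏ i, g i (s i)) * ∏ l, r (∑ i, latStep (s i) l - z l) := by
    rw [Finset.sum_filter]
    refine Finset.sum_le_sum fun s _ => ?_
    split_ifs with hs
    · rw [Finset.prod_eq_one (s := Finset.univ) (f := fun l => r (∑ i, latStep (s i) l - z l)),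
        mul_one]
      intro l _
      exact hr1 _ (by rw [hs l, sub_self])
    · exact mul_nonneg (hG s) (hR s)
  have step2 : ((∑ s : Fin N → Fin d × Bool,
        (∏ i, g i (s i)) * ∏ l, r (∑ i, latStep (s i) l - z l) : ℝ) : ℂ)
      = (((2 * M : ℕ) : ℂ) ^ d)⁻¹ * ∑ κ : Fin d → Fin (2 * M),
        Complex.exp (-(Complex.I * ∑ l, θ κ l * (z l : ℂ))) *
          ∏ i : Fin N, ∑ p : Fin d × Bool, (g i p : ℂ) *
            Complex.exp (Complex.I * ∑ l, θ κ l * (latStep p l : ℂ)) := by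
    push_cast
    have h1 : ∀ s : Fin N → Fin d × Bool,
        ∏ l, ((r (∑ i, latStep (s i) l - z l) : ℝ) : ℂ)
          = (((2 * M : ℕ) : ℂ) ^ d)⁻¹ * ∑ κ : Fin d → Fin (2 * M),
            Complex.exp (-(Complex.I * ∑ l, θ κ l * (z l : ℂ))) *
              ∏ i : Fin N, Complex.exp (Complex.I * ∑ l, θ κ l * (latStep (s i) l : ℂ)) := by
      intro s
      simp only [← hr]
      rw [Finset.prod_mul_distrib, Finset.prod_const, Finset.card_univ, Fintype.card_fin, inv_pow,
        Fintype.prod_sum]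
      congr 1
      refine Finset.sum_congr rfl fun κ _ => ?_
      rw [← Complex.exp_sum, ← Complex.exp_sum, ← Complex.exp_add]
      congr 1
      rw [← Finset.mul_sum, ← Finset.mul_sum, ← mul_neg, ← mul_add]
      congr 1
      rw [Finset.sum_comm, ← Finset.sum_neg_distrib, ← Finset.sum_add_distrib]
      refine Finset.sum_congr rfl fun l _ => ?_
      rw [← Finset.mul_sum]
      push_cast
      simp only [hθ]
      push_cast
      ring
    simp only [h1, Fintype.prod_sum]
    simp only [Finset.mul_sum]
    rw [Finset.sum_comm]
    refine Finset.sum_congr rfl fun κ _ => Finset.sum_congr rfl fun s _ => ?_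
    rw [Finset.prod_mul_distrib]
    push_cast
    ring
  have hnn : 0 ≤ ∑ s : Fin N → Fin d × Bool,
      (∏ i, g i (s i)) * ∏ l, r (∑ i, latStep (s i) l - z l) :=
    Finset.sum_nonneg fun s _ => mul_nonneg (hG s) (hR s)
  refine step1.trans ?_
  rw [← Real.norm_of_nonneg hnn, ← Complex.norm_real, step2, norm_mul, norm_inv, norm_pow,
    Complex.norm_natCast]
  gcongr
  refine (norm_sum_le _ _).trans (Finset.sum_le_sum fun κ _ => ?_)
  rw [norm_mul, norm_prod]
  have : ‖Complex.exp (-(Complex.I * ∑ l, θ κ l * (z l : ℂ)))‖ = 1 := by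
    have e : -(Complex.I * ∑ l, θ κ l * (z l : ℂ))
        = ((-∑ l, (π * (κ l : ℕ) / M : ℝ) * (z l : ℝ) : ℝ) : ℂ) * Complex.I := by
      simp only [hθ]
      push_cast
      ring
    rw [e, Complex.norm_exp_ofReal_mul_I]
  rw [this, one_mul]

lemma sum_mul_latStep {d : ℕ} (θ : Fin d → ℝ) (p : Fin d × Bool) :
    ∑ l, (θ l : ℂ) * (latStep p l : ℂ) = if p.2 then (θ p.1 : ℂ) else -(θ p.1 : ℂ) := by
  rw [Finset.sum_eq_single p.1]
  · unfold latStep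
    split_ifs <;> simp_all
  · intro l _ hl
    simp [latStep, hl.symm]
  · simp

lemma abs_cos_le_one_sub (t : ℝ) : |cos t| ≤ 1 - sin t ^ 2 / 2 := by
  have h := Real.sin_sq_add_cos_sq t
  have h2 := sq_abs (cos t)
  nlinarith [sq_nonneg (|cos t| - 1)]

/-- The characteristic function of a lattice step. -/
lemma norm_sum_char_le {d : ℕ} (hd : 1 ≤ d) (θ : Fin d → ℝ) :
    ‖∑ p : Fin d × Bool, Complex.exp (Complex.I * ∑ l, (θ l : ℂ) * (latStep p l : ℂ))‖
      ≤ (2 * d) * Real.exp (-(1 / (2 * d)) * ∑ l, sin (θ l) ^ 2) := by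
  have hd' : (0 : ℝ) < d := by exact_mod_cast hd
  have h1 : ∑ p : Fin d × Bool, Complex.exp (Complex.I * ∑ l, (θ l : ℂ) * (latStep p l : ℂ))
      = ((∑ l, 2 * cos (θ l) : ℝ) : ℂ) := by
    simp only [sum_mul_latStep]
    rw [Fintype.sum_prod_type]
    push_cast
    refine Finset.sum_congr rfl fun l _ => ?_
    simp only [Fintype.sum_bool, if_true, Bool.false_eq_true, if_false]
    rw [Complex.two_cos]
    congr 2 <;> ring
  rw [h1, Complex.norm_real]
  calc ‖∑ l, 2 * cos (θ l)‖ ≤ ∑ l, ‖2 * cos (θ l)‖ := norm_sum_le _ _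
    _ ≤ ∑ l, 2 * (1 - sin (θ l) ^ 2 / 2) := by
        refine Finset.sum_le_sum fun l _ => ?_
        rw [Real.norm_eq_abs, abs_mul, abs_of_pos (two_pos)]
        gcongr
        exact abs_cos_le_one_sub _
    _ = (2 * d) * (-(1 / (2 * d)) * ∑ l, sin (θ l) ^ 2 + 1) := by
        rw [← Finset.mul_sum, Finset.sum_sub_distrib, ← Finset.sum_div]
        simp only [Finset.sum_const, Finset.card_univ, Fintype.card_fin, nsmul_eq_mul, mul_one]
        field_simp
        ring
    _ ≤ _ := by
        gcongr
        exact Real.add_one_le_exp _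

/-- A tilted lattice step. -/
lemma norm_sum_tilted_char_le {d : ℕ} (θ : Fin d → ℝ) (j : Fin d) (c : ℝ) :
    ‖∑ p : Fin d × Bool, ((Real.exp (c * latStep p j) : ℝ) : ℂ) *
        Complex.exp (Complex.I * ∑ l, (θ l : ℂ) * (latStep p l : ℂ))‖
      ≤ (2 * d) * Real.exp (c ^ 2 / 2) := by
  have h0 : 1 ≤ Real.exp (c ^ 2 / 2) := Real.one_le_exp (by positivity)
  calc _ ≤ ∑ p : Fin d × Bool, Real.exp (c * latStep p j) := by
        refine (norm_sum_le _ _).trans (Finset.sum_le_sum fun p _ => ?_)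
        have e : Complex.I * ∑ l, (θ l : ℂ) * (latStep p l : ℂ)
            = ((∑ l, θ l * latStep p l : ℝ) : ℂ) * Complex.I := by
          push_cast
          ring
        rw [norm_mul, e, Complex.norm_exp_ofReal_mul_I, mul_one, Complex.norm_real,
          Real.norm_of_nonneg (Real.exp_pos _).le]
    _ = ∑ l : Fin d, (if l = j then 2 * cosh c else 2) := by
        rw [Fintype.sum_prod_type]
        refine Finset.sum_congr rfl fun l _ => ?_
        simp only [Fintype.sum_bool, latStep]
        by_cases h : l = j
        · simp only [h, if_true, Bool.false_eq_true, if_false, Real.cosh_eq]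
          push_cast
          rw [mul_one, mul_neg_one]
          ring
        · simp only [h, if_false, Int.cast_zero, mul_zero, Real.exp_zero]
          norm_num
    _ ≤ ∑ l : Fin d, 2 * Real.exp (c ^ 2 / 2) := by
        refine Finset.sum_le_sum fun l _ => ?_
        split_ifs
        · have := Real.cosh_le_exp_half_sq c
          linarith
        · linarith
    _ = _ := by
        simp
        ring

/-- The constant in the local limit bound `sum_walks_exp_le`. -/
def localConst (d : ℕ) : ℝ := 4 * Real.exp 1 / (1 - Real.exp (-(1 / (2 * d))))

lemma localConst_pos {d : ℕ} (hd : 1 ≤ d) : 0 < localConst d := by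
  have hd' : (0 : ℝ) < d := by exact_mod_cast hd
  have : Real.exp (-(1 / (2 * d))) < 1 := Real.exp_lt_one_iff.2 (by
    have : 0 < 1 / (2 * (d : ℝ)) := by positivity
    linarith)
  exact div_pos (by positivity) (by linarith)

lemma two_mul_le_mul_sin {k M : ℕ} (hM : 0 < M) (h : 2 * k ≤ M) :
    2 * (k : ℝ) / M ≤ sin (π * k / M) := by
  have hM' : (0 : ℝ) < M := by exact_mod_cast hM
  have h' : 2 * (k : ℝ) ≤ M := by exact_mod_cast h
  have := Real.mul_le_sin (x := π * k / M) (by positivity) (by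
    rw [div_le_div_iff₀ hM' two_pos]
    nlinarith [Real.pi_pos])
  calc 2 * (k : ℝ) / M = 2 / π * (π * k / M) := by
        field_simp
    _ ≤ _ := this

lemma exp_neg_mul_sin_sq_le {d : ℕ} (hd : 1 ≤ d) {n k M : ℕ} (hM : 0 < M)
    (hMn : M ^ 2 ≤ 4 * (n + 1)) {t : ℝ} (ht : 2 * (k : ℝ) / M ≤ sin t) :
    Real.exp (-((n : ℝ) / (2 * d)) * sin t ^ 2)
      ≤ Real.exp 1 * Real.exp (-(1 / (2 * d))) ^ k := by
  have hd' : (1 : ℝ) ≤ d := by exact_mod_cast hd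
  have hM' : (0 : ℝ) < M := by exact_mod_cast hM
  have hMn' : (M : ℝ) ^ 2 ≤ 4 * (n + 1) := by exact_mod_cast hMn
  rw [← Real.exp_nat_mul, ← Real.exp_add, Real.exp_le_exp]
  have hk : (k : ℝ) ≤ (k : ℝ) ^ 2 := by exact_mod_cast Nat.le_self_pow two_ne_zero k
  have h1 : (2 * (k : ℝ) / M) ^ 2 ≤ sin t ^ 2 := by gcongr
  have h2 : sin t ^ 2 ≤ 1 := Real.sin_sq_le_one t
  have h3 : (k : ℝ) ^ 2 ≤ (n + 1) * sin t ^ 2 := by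
    calc (k : ℝ) ^ 2 = M ^ 2 / 4 * (2 * (k : ℝ) / M) ^ 2 := by
          field_simp
          ring
      _ ≤ (n + 1) * sin t ^ 2 := by gcongr; linarith
  have h4 : (k : ℝ) ≤ n * sin t ^ 2 + 2 * d := by nlinarith
  have h5 : (k : ℝ) / (2 * d) ≤ (n * sin t ^ 2 + 2 * d) / (2 * d) := by gcongr
  have e : (n * sin t ^ 2 + 2 * d) / (2 * d) = (n : ℝ) / (2 * d) * sin t ^ 2 + 1 := by
    field_simp
  rw [e] at h5
  have e2 : (k : ℝ) * -(1 / (2 * d)) = -((k : ℝ) / (2 * d)) := by ring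
  rw [e2]
  linarith

lemma sum_exp_sin_le {d : ℕ} (hd : 1 ≤ d) {n M : ℕ} (hM : 0 < M) (hMn : M ^ 2 ≤ 4 * (n + 1)) :
    ∑ k : Fin (2 * M), Real.exp (-((n : ℝ) / (2 * d)) * sin (π * (k : ℕ) / M) ^ 2)
      ≤ localConst d := by
  have hd' : (0 : ℝ) < d := by exact_mod_cast hd
  have hM' : (0 : ℝ) < M := by exact_mod_cast hM
  set f : ℕ → ℝ := fun k => Real.exp (-((n : ℝ) / (2 * d)) * sin (π * k / M) ^ 2) with hf
  set b : ℝ := Real.exp (-(1 / (2 * d))) with hb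
  have hb0 : 0 < b := Real.exp_pos _
  have hb1 : b < 1 := Real.exp_lt_one_iff.2 (by
    have : 0 < 1 / (2 * (d : ℝ)) := by positivity
    linarith)
  have hgeom : ∑ k ∈ Finset.range M, b ^ k ≤ 1 / (1 - b) := by
    have := (summable_geometric_of_lt_one hb0.le hb1).sum_le_tsum (Finset.range M)
      (fun k _ => by positivity)
    rwa [tsum_geometric_of_lt_one hb0.le hb1, ← one_div] at this
  have hpt : ∀ k ∈ Finset.range M, f k ≤ Real.exp 1 * (b ^ k + b ^ (M - 1 - k)) := by
    intro k hk
    have hkM := Finset.mem_range.1 hk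
    rcases le_total (2 * k) M with h | h
    · refine (exp_neg_mul_sin_sq_le hd hM hMn (two_mul_le_mul_sin hM h)).trans ?_
      gcongr
      have : 0 < b ^ (M - 1 - k) := by positivity
      linarith
    · have e : sin (π * k / M) = sin (π * ((M - k : ℕ) : ℝ) / M) := by
        rw [← Real.sin_pi_sub, Nat.cast_sub hkM.le]
        congr 1
        field_simp
      refine (exp_neg_mul_sin_sq_le hd hM hMn (k := M - k) ?_).trans ?_
      · rw [e]
        exact two_mul_le_mul_sin hM (by omega)
      · gcongr
        have h1 : b ^ (M - k) ≤ b ^ (M - 1 - k) :=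
          pow_le_pow_of_le_one hb0.le hb1.le (by omega)
        have : 0 < b ^ k := by positivity
        linarith
  have hper : ∀ k : ℕ, f (M + k) = f k := by
    intro k
    have e : π * ((M + k : ℕ) : ℝ) / M = π * k / M + π := by
      push_cast
      field_simp
      ring
    simp only [hf]
    rw [e, Real.sin_add_pi, neg_sq]
  have hhalf : ∑ k ∈ Finset.range M, f k ≤ Real.exp 1 * (1 / (1 - b) + 1 / (1 - b)) := by
    refine (Finset.sum_le_sum hpt).trans ?_
    rw [← Finset.mul_sum, Finset.sum_add_distrib, Finset.sum_range_reflect (fun k => b ^ k)]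
    gcongr
  calc _ = ∑ k ∈ Finset.range (2 * M), f k := Fin.sum_univ_eq_sum_range f (2 * M)
    _ = ∑ k ∈ Finset.range M, f k + ∑ k ∈ Finset.range M, f k := by
        rw [two_mul, Finset.sum_range_add]
        simp only [hper]
    _ ≤ Real.exp 1 * (1 / (1 - b) + 1 / (1 - b)) + Real.exp 1 * (1 / (1 - b) + 1 / (1 - b)) :=
        add_le_add hhalf hhalf
    _ = localConst d := by
        unfold localConst
        rw [← hb]
        ring

/-- Exponential moments of a weighted sum of steps, on walks with prescribed endpoint: the walk
satisfies a local limit bound in terms of the number `n` of steps with weight zero. -/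
lemma sum_walks_exp_le {d : ℕ} (hd : 1 ≤ d) (N : ℕ) (z : Fin d → ℤ) (j : Fin d)
    (c : Fin N → ℝ) {n : ℕ} (hn : n = (Finset.univ.filter fun i => c i = 0).card) :
    ∑ s ∈ Finset.univ.filter (fun s : Fin N → Fin d × Bool => ∀ l, ∑ i, latStep (s i) l = z l),
        Real.exp (∑ i, c i * latStep (s i) j)
      ≤ (2 * d) ^ N * Real.exp ((∑ i, c i ^ 2) / 2) *
        (localConst d / √(n + 1)) ^ d := by
  have hd' : (0 : ℝ) < d := by exact_mod_cast hd
  set M := Nat.sqrt n + 1 with hMdef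
  have hM : 0 < M := Nat.succ_pos _
  have hM' : (0 : ℝ) < M := by exact_mod_cast hM
  have hM1 : n + 1 ≤ M ^ 2 := Nat.succ_le_of_lt (by rw [sq]; exact Nat.lt_succ_sqrt n)
  have hM2 : M ^ 2 ≤ 4 * (n + 1) := by
    have := Nat.sqrt_le n
    nlinarith [sq_nonneg ((Nat.sqrt n : ℤ) - 1)]
  have hfac : ∀ (κ : Fin d → Fin (2 * M)) (i : Fin N),
      ‖∑ p : Fin d × Bool, ((Real.exp (c i * latStep p j) : ℝ) : ℂ) *
          Complex.exp (Complex.I * ∑ l, ((π * (κ l : ℕ) / M : ℝ) : ℂ) * (latStep p l : ℂ))‖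
        ≤ (2 * d) * Real.exp (c i ^ 2 / 2) *
          (if c i = 0 then
            Real.exp (-(1 / (2 * d)) * ∑ l, sin (π * (κ l : ℕ) / M) ^ 2) else 1) := by
    intro κ i
    split_ifs with h
    · simp only [h, zero_mul, Real.exp_zero, Complex.ofReal_one, one_mul]
      refine (norm_sum_char_le hd fun l => π * (κ l : ℕ) / M).trans (le_of_eq ?_)
      simp
    · rw [mul_one]
      exact norm_sum_tilted_char_le _ j (c i)
  calc _ = ∑ s ∈ Finset.univ.filter
          (fun s : Fin N → Fin d × Bool => ∀ l, ∑ i, latStep (s i) l = z l),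
        ∏ i, Real.exp (c i * latStep (s i) j) := by simp only [Real.exp_sum]
    _ ≤ _ := sum_walks_le_fourier N hM z (fun i p => Real.exp (c i * latStep p j))
        fun i p => (Real.exp_pos _).le
    _ ≤ (((2 * M : ℕ) : ℝ) ^ d)⁻¹ * ∑ κ : Fin d → Fin (2 * M),
          ((2 * d) ^ N * Real.exp ((∑ i, c i ^ 2) / 2)) *
            ∏ l, Real.exp (-((n : ℝ) / (2 * d)) * sin (π * (κ l : ℕ) / M) ^ 2) := by
        gcongr with κ _
        refine (Finset.prod_le_prod (fun i _ => norm_nonneg _) fun i _ => hfac κ i).trans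
          (le_of_eq ?_)
        rw [Finset.prod_mul_distrib, Finset.prod_mul_distrib, ← Real.exp_sum, Finset.sum_div,
          Finset.prod_const, Finset.card_univ, Fintype.card_fin, Finset.prod_ite,
          Finset.prod_const, Finset.prod_const_one, mul_one, ← hn, ← Real.exp_nat_mul,
          ← Real.exp_sum, ← Finset.mul_sum]
        congr 2
        ring
    _ = (2 * d) ^ N * Real.exp ((∑ i, c i ^ 2) / 2) *
          ((∑ k : Fin (2 * M), Real.exp (-((n : ℝ) / (2 * d)) * sin (π * (k : ℕ) / M) ^ 2)) /
            (2 * M : ℕ)) ^ d := by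
        rw [← Finset.mul_sum, div_pow, ← Fin.prod_const d (∑ k : Fin (2 * M), _),
          Fintype.prod_sum]
        ring
    _ ≤ _ := by
        gcongr
        · exact (localConst_pos hd).le
        · exact sum_exp_sin_le hd hM hM2
        · rw [Real.sqrt_le_left (by positivity)]
          have h1 : ((n : ℝ) + 1) ≤ M ^ 2 := by exact_mod_cast hM1
          push_cast
          nlinarith

lemma stepVec_apply {d : ℕ} (a : ℝ) (p : Fin d × Bool) (j : Fin d) :
    stepVec a p j = a * latStep p j := by
  simp only [stepVec, latStep, PiLp.smul_apply, PiLp.single_apply, smul_eq_mul]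
  by_cases h : p.1 = j
  · rw [if_pos h.symm, if_pos h]
    split_ifs <;> simp
  · rw [if_neg (Ne.symm h), if_neg h]
    simp

lemma evalAt_pwLinE_sub {d : ℕ} (x : Ed d) (N : ℕ) (a : ℝ) (s : Fin N → Fin d × Bool)
    {u v : ℝ} (hu : u ∈ Icc (0 : ℝ) 1) (hv : v ∈ Icc (0 : ℝ) 1) (j : Fin d) :
    (evalAt (pwLinE x N fun i => stepVec a (s i)) v
        - evalAt (pwLinE x N fun i => stepVec a (s i)) u) j
      = ∑ i, a * incWeight N u v i * latStep (s i) j := by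
  have h : ∀ t ∈ Icc (0 : ℝ) 1, evalAt (pwLinE x N fun i => stepVec a (s i)) t
      = x + ∑ i : Fin N, clamp01 ((N : ℝ) * t - ((i : ℕ) : ℝ)) • stepVec a (s i) := by
    intro t ht
    rw [evalAt, Set.projIcc_of_mem _ ht]
    rfl
  rw [h u hu, h v hv, add_sub_add_left_eq_sub, ← Finset.sum_sub_distrib, WithLp.ofLp_sum,
    Finset.sum_apply]
  refine Finset.sum_congr rfl fun i _ => ?_
  simp only [PiLp.sub_apply, PiLp.smul_apply, stepVec_apply, smul_eq_mul, incWeight]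
  ring

lemma continuous_evalAt {d : ℕ} (x y : Ed d) (t : ℝ) :
    Continuous fun ω : Omega2 x y => evalAt ω.1 t :=
  (continuous_eval_const _).comp continuous_subtype_val

lemma VxyaN_le {d : ℕ} (hd : 1 ≤ d) {x y : Ed d} {a : ℝ} (ha : 0 < a) {z : Fin d → ℤ}
    (hz : ∀ j, (x - y) j = a * z j) (N : ℕ) {B : Set (Omega2 x y)} (hB : MeasurableSet B)
    {F : (Fin N → Fin d × Bool) → ℝ} (hF0 : ∀ s, 0 ≤ F s)
    (hF : ∀ s h, pwLin2 x y N (fun i => stepVec a (s i)) h ∈ B → 1 ≤ F s) :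
    VxyaN x y a N B ≤ ENNReal.ofReal ((a ^ d)⁻¹ * (((2 * d : ℝ) ^ N)⁻¹ *
      ∑ s ∈ Finset.univ.filter
        (fun s : Fin N → Fin d × Bool => ∀ l, ∑ i, latStep (s i) l = (-z) l), F s)) := by
  classical
  have hd' : (0 : ℝ) < d := by exact_mod_cast hd
  have hiff : ∀ s : Fin N → Fin d × Bool,
      s ∈ Finset.univ.filter
        (fun s : Fin N → Fin d × Bool => ∀ l, ∑ i, latStep (s i) l = (-z) l) ↔
      x + ∑ i, stepVec a (s i) = y := by
    intro s
    simp only [Finset.mem_filter, Finset.mem_univ, true_and]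
    have h1 : ∀ l, (x + ∑ i, stepVec a (s i)) l = x l + a * ((∑ i, latStep (s i) l : ℤ) : ℝ) := by
      intro l
      rw [PiLp.add_apply, WithLp.ofLp_sum, Finset.sum_apply]
      simp only [stepVec_apply]
      rw [← Finset.mul_sum]
      push_cast
      rfl
    constructor
    · intro h
      ext l
      rw [h1, h l]
      have := hz l
      rw [PiLp.sub_apply] at this
      push_cast [Pi.neg_apply]
      linarith
    · intro h l
      have h2 := h1 l
      have := hz l
      rw [PiLp.sub_apply] at this
      rw [h] at h2
      have h3 : a * ((∑ i, latStep (s i) l : ℤ) : ℝ) = a * ((-z l : ℤ) : ℝ) := by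
        push_cast at h2 ⊢
        linarith
      exact_mod_cast mul_left_cancel₀ ha.ne' h3
  have hw : ENNReal.ofReal (a ^ (-(d : ℝ))) * (((2 * d : ℕ) : ℝ≥0∞) ^ N)⁻¹
      = ENNReal.ofReal ((a ^ d)⁻¹ * ((2 * d : ℝ) ^ N)⁻¹) := by
    rw [ENNReal.ofReal_mul (by positivity), Real.rpow_neg ha.le, Real.rpow_natCast,
      ENNReal.ofReal_inv_of_pos (x := (2 * d : ℝ) ^ N) (by positivity),
      ENNReal.ofReal_pow (by positivity)]
    congr 3
    rw [← ENNReal.ofReal_natCast]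
    push_cast
    rfl
  rw [VxyaN, Measure.sum_apply _ hB, tsum_fintype, ← mul_assoc, Finset.mul_sum,
    Finset.sum_subtype _ hiff, ENNReal.ofReal_sum_of_nonneg (fun s _ => by
      have := hF0 s.1
      positivity)]
  refine Finset.sum_le_sum fun s _ => ?_
  rw [Measure.smul_apply, hw, smul_eq_mul,
    ENNReal.ofReal_mul (p := (a ^ d)⁻¹ * ((2 * d : ℝ) ^ N)⁻¹) (by positivity),
    Measure.dirac_apply' _ hB]
  gcongr
  by_cases hs : pwLin2 x y N (fun i => stepVec a (s.1 i)) s.2 ∈ B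
  · rw [Set.indicator_of_mem hs]
    exact ENNReal.one_le_ofReal.2 (hF _ _ hs)
  · rw [Set.indicator_of_notMem hs]
    exact zero_le

lemma VxyaN_univ_le {d : ℕ} (hd : 1 ≤ d) {x y : Ed d} {a : ℝ} (ha : 0 < a) {z : Fin d → ℤ}
    (hz : ∀ j, (x - y) j = a * z j) {N : ℕ} (hN : 1 ≤ N) :
    VxyaN x y a N univ ≤ ENNReal.ofReal ((2 * localConst d / (a * √N)) ^ d) := by
  have hd' : (0 : ℝ) < d := by exact_mod_cast hd
  have hN' : (0 : ℝ) < N := by exact_mod_cast hN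
  have hC := localConst_pos hd
  refine (VxyaN_le hd ha hz N MeasurableSet.univ (F := fun _ => 1) (fun _ => zero_le_one)
    (fun _ _ _ => le_rfl)).trans (ENNReal.ofReal_le_ofReal ?_)
  have h := sum_walks_exp_le hd N (-z) ⟨0, hd⟩ (fun _ => 0) (n := N) (by simp)
  simp only [zero_mul, Finset.sum_const_zero, Real.exp_zero, mul_one, ne_eq, OfNat.ofNat_ne_zero,
    not_false_eq_true, zero_pow, zero_div] at h
  calc _ ≤ (a ^ d)⁻¹ * (((2 * d : ℝ) ^ N)⁻¹ * ((2 * d) ^ N * (localConst d / √(N + 1)) ^ d)) := by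
        gcongr
    _ = (localConst d / (a * √(N + 1))) ^ d := by
        rw [inv_mul_cancel_left₀ (by positivity), div_pow, div_pow, mul_pow]
        field_simp
    _ ≤ _ := by
        gcongr
        · linarith
        · linarith

/-- Tail bound for the increments of pinned lattice walks. -/
lemma VxyaN_increment_le {d : ℕ} (hd : 1 ≤ d) {x y : Ed d} {a : ℝ} (ha : 0 < a)
    {z : Fin d → ℤ} (hz : ∀ j, (x - y) j = a * z j) {N : ℕ} (hN : 1 ≤ N)
    {u v : ℝ} (hu : 0 ≤ u) (huv : u < v) (hv : v ≤ 1) (h : v - u ≤ 1 / 2)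
    (j : Fin d) {ε : ℝ} (hε : 0 < ε) (q : ℕ) :
    VxyaN x y a N {ω | ε < |(evalAt ω.1 v - evalAt ω.1 u) j|}
      ≤ ENNReal.ofReal (2 * Real.exp (1 / 2) * (2 * q).factorial *
        (2 * localConst d / (a * √N)) ^ d * (((a * √N) ^ 2 * (v - u)) ^ q / (ε ^ 2) ^ q)) := by
  have hd' : (0 : ℝ) < d := by exact_mod_cast hd
  have hN' : (0 : ℝ) < N := by exact_mod_cast hN
  have hC := localConst_pos hd
  have hh : 0 < v - u := sub_pos.2 huv
  set τ : ℝ := a * √N with hτ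
  have hτ0 : 0 < τ := by positivity
  set lam : ℝ := (√(τ ^ 2 * (v - u)))⁻¹ with hlam
  have hlam0 : 0 < lam := by positivity
  have hlam2 : lam ^ 2 = (τ ^ 2 * (v - u))⁻¹ := by
    rw [hlam, inv_pow, Real.sq_sqrt (by positivity)]
  have hB : MeasurableSet {ω : Omega2 x y | ε < |(evalAt ω.1 v - evalAt ω.1 u) j|} := by
    refine (isOpen_lt continuous_const ?_).measurableSet
    exact ((EuclideanSpace.proj (𝕜 := ℝ) j).continuous.comp
      ((continuous_evalAt x y v).sub (continuous_evalAt x y u))).abs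
  set X : (Fin N → Fin d × Bool) → ℝ := fun s => ∑ i, a * incWeight N u v i * latStep (s i) j
    with hX
  refine (VxyaN_le hd ha hz N hB
    (F := fun s => Real.exp (-(lam * ε)) * (Real.exp (lam * X s) + Real.exp (-lam * X s)))
    (fun s => by positivity) ?_).trans (ENNReal.ofReal_le_ofReal ?_)
  · intro s hs hmem
    have hmem' : ε < |X s| := by
      have := hmem
      simp only [Set.mem_ofPred_eq, pwLin2] at this
      rwa [evalAt_pwLinE_sub x N a s ⟨hu, by linarith⟩ ⟨by linarith, hv⟩ j] at this
    have h1 : Real.exp (lam * ε) ≤ Real.exp (lam * X s) + Real.exp (-lam * X s) := by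
      rcases lt_abs.1 hmem' with h | h
      · have : Real.exp (lam * ε) ≤ Real.exp (lam * X s) := Real.exp_le_exp.2 (by gcongr)
        have := Real.exp_pos (-lam * X s)
        linarith
      · have : Real.exp (lam * ε) ≤ Real.exp (-lam * X s) := by
          rw [neg_mul_comm]
          exact Real.exp_le_exp.2 (by gcongr)
        have := Real.exp_pos (lam * X s)
        linarith
    calc (1 : ℝ) = Real.exp (-(lam * ε)) * Real.exp (lam * ε) := by
          rw [← Real.exp_add, neg_add_cancel, Real.exp_zero]
      _ ≤ _ := by gcongr
  · set n := (Finset.univ.filter fun i => incWeight N u v i = 0).card with hn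
    have hn4 : (N : ℝ) / 4 ≤ n + 1 := card_incWeight_eq_zero N hu huv.le h
    have hsqrt : √N / 2 ≤ √((n : ℝ) + 1) := by
      refine Real.le_sqrt_of_sq_le ?_
      rw [div_pow, Real.sq_sqrt hN'.le]
      linarith
    have hsum : ∀ b : ℝ, b ^ 2 = lam ^ 2 →
        ∑ s ∈ Finset.univ.filter
            (fun s : Fin N → Fin d × Bool => ∀ l, ∑ i, latStep (s i) l = (-z) l),
          Real.exp (b * X s)
        ≤ (2 * d) ^ N * Real.exp (1 / 2) * (2 * localConst d / √N) ^ d := by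
      intro b hb
      have hb0 : b ≠ 0 := by
        rintro rfl
        rw [zero_pow two_ne_zero] at hb
        exact hlam0.ne' (pow_eq_zero_iff two_ne_zero |>.1 hb.symm)
      have key := sum_walks_exp_le hd N (-z) j (fun i => b * (a * incWeight N u v i)) (n := n) (by
        rw [hn]
        congr 1
        ext i
        simp [hb0, ha.ne'])
      have e : ∀ s : Fin N → Fin d × Bool,
          ∑ i, b * (a * incWeight N u v i) * latStep (s i) j = b * X s := by
        intro s
        rw [hX, Finset.mul_sum]
        exact Finset.sum_congr rfl fun i _ => by ring
      simp only [e] at key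
      refine key.trans ?_
      have hc : ∑ i, (b * (a * incWeight N u v i)) ^ 2 ≤ 1 := by
        calc ∑ i, (b * (a * incWeight N u v i)) ^ 2
            = lam ^ 2 * a ^ 2 * ∑ i, incWeight N u v i ^ 2 := by
              rw [Finset.mul_sum, ← hb]
              exact Finset.sum_congr rfl fun i _ => by ring
          _ ≤ lam ^ 2 * a ^ 2 * (N * (v - u)) := by
              gcongr
              exact sum_sq_incWeight_le N hu huv.le hv
          _ = 1 := by
              rw [hlam2, hτ, mul_pow, Real.sq_sqrt hN'.le]
              field_simp
      have hfrac : localConst d / √((n : ℝ) + 1) ≤ 2 * localConst d / √N := by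
        calc localConst d / √((n : ℝ) + 1) ≤ localConst d / (√N / 2) := by gcongr
          _ = _ := by field_simp
      gcongr
    have hexp : Real.exp (-(lam * ε)) ≤
        (2 * q).factorial * ((τ ^ 2 * (v - u)) ^ q / (ε ^ 2) ^ q) := by
      have h1 := Real.pow_div_factorial_le_exp (x := lam * ε) (by positivity) (2 * q)
      have hf : (0 : ℝ) < (2 * q).factorial := by exact_mod_cast Nat.factorial_pos _
      rw [Real.exp_neg]
      calc (Real.exp (lam * ε))⁻¹ ≤ ((lam * ε) ^ (2 * q) / (2 * q).factorial)⁻¹ := by gcongr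
        _ = _ := by
            rw [pow_mul, mul_pow, hlam2, mul_pow, inv_pow]
            field_simp
    rw [← Finset.mul_sum, Finset.sum_add_distrib]
    have h1 := hsum lam rfl
    have h2 := hsum (-lam) (by ring)
    have hf : (0 : ℝ) < (2 * q).factorial := by exact_mod_cast Nat.factorial_pos _
    calc _ ≤ (a ^ d)⁻¹ * (((2 * d : ℝ) ^ N)⁻¹ *
          ((2 * q).factorial * ((τ ^ 2 * (v - u)) ^ q / (ε ^ 2) ^ q) *
            ((2 * d) ^ N * Real.exp (1 / 2) * (2 * localConst d / √N) ^ d +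
              (2 * d) ^ N * Real.exp (1 / 2) * (2 * localConst d / √N) ^ d))) := by
          gcongr
      _ = _ := by
          rw [hτ, div_pow _ (√N), div_pow _ (a * √N), mul_pow a (√N) d]
          field_simp
          norm_num

/-- Paths from `x` to `y` whose increments over dyadic intervals of length `2⁻ʳ`, `r ≥ 1`, are
at most `R (9/10)ʳ` in every coordinate. -/
def dyadicHolder {d : ℕ} (x y : Ed d) (R : ℝ) : Set (Omega2 x y) :=
  {ω | ∀ (r i : ℕ) (j : Fin d), 1 ≤ r → i + 1 ≤ 2 ^ r →
    |(evalAt ω.1 (((i + 1 : ℕ) : ℝ) / 2 ^ r) - evalAt ω.1 ((i : ℝ) / 2 ^ r)) j|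
      ≤ R * (9 / 10) ^ r}

lemma isClosed_dyadicHolder {d : ℕ} (x y : Ed d) (R : ℝ) : IsClosed (dyadicHolder x y R) := by
  simp only [dyadicHolder, Set.ofPred_forall]
  refine isClosed_iInter fun r => isClosed_iInter fun i => isClosed_iInter fun j =>
    isClosed_iInter fun _ => isClosed_iInter fun _ => isClosed_le ?_ continuous_const
  exact ((EuclideanSpace.proj (𝕜 := ℝ) j).continuous.comp
    ((continuous_evalAt x y _).sub (continuous_evalAt x y _))).abs

lemma dyadicHolder_norm_sub_le {d : ℕ} {x y : Ed d} {R : ℝ} (hR : 0 ≤ R) {ω : Omega2 x y}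
    (hω : ω ∈ dyadicHolder x y R) {s t : unitInterval} {n : ℕ} (hn : 1 ≤ n)
    (hst : dist s t ≤ 1 / 2 ^ n) :
    dist (ω.1 s) (ω.1 t) ≤ d * (19 * R * (9 / 10) ^ n) := by
  wlog hle : s ≤ t generalizing s t
  · rw [dist_comm]
    exact this (by rwa [dist_comm]) (le_of_not_ge hle)
  have hcoord : ∀ j, |(ω.1 t - ω.1 s) j| ≤ 19 * R * (9 / 10) ^ n := by
    intro j
    have hf : Continuous fun r : ℝ => (evalAt ω.1 r) j :=
      (EuclideanSpace.proj (𝕜 := ℝ) j).continuous.comp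
        (ω.1.continuous.comp continuous_projIcc)
    have hinc : ∀ r i : ℕ, 1 ≤ r →
        |(evalAt ω.1 (((i + 1 : ℕ) : ℝ) / 2 ^ r)) j - (evalAt ω.1 ((i : ℝ) / 2 ^ r)) j|
          ≤ R * (9 / 10) ^ r := by
      intro r i hr
      rcases le_or_gt (i + 1) (2 ^ r) with h | h
      · exact hω r i j hr h
      · have h' : ((2 : ℝ) ^ r) ≤ i := by exact_mod_cast Nat.le_of_lt_succ h
        have e1 : evalAt ω.1 ((i : ℝ) / 2 ^ r) = ω.1 1 := by
          rw [evalAt, Set.projIcc_of_right_le _ (by rw [le_div_iff₀ (by positivity)]; linarith)]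
          rfl
        have e2 : evalAt ω.1 (((i + 1 : ℕ) : ℝ) / 2 ^ r) = ω.1 1 := by
          rw [evalAt, Set.projIcc_of_right_le _ (by
            rw [le_div_iff₀ (by positivity)]; push_cast; linarith)]
          rfl
        rw [e1, e2, sub_self, abs_zero]
        positivity
    have key := abs_sub_le_of_dyadic hf hinc (s := s) (t := t) s.2.1 hle hn (by
      rw [dist_comm, Subtype.dist_eq, Real.dist_eq] at hst
      exact (le_abs_self _).trans hst)
    simpa [evalAt, Set.projIcc_val] using key
  rw [dist_comm, dist_eq_norm]
  calc ‖ω.1 t - ω.1 s‖ ≤ ∑ j, |(ω.1 t - ω.1 s) j| := by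
        rw [EuclideanSpace.norm_eq]
        refine Real.sqrt_le_left (Finset.sum_nonneg fun _ _ => abs_nonneg _) |>.2 ?_
        exact Finset.sum_sq_le_sq_sum_of_nonneg fun _ _ => abs_nonneg _
    _ ≤ ∑ _j : Fin d, 19 * R * (9 / 10) ^ n := Finset.sum_le_sum fun j _ => hcoord j
    _ = _ := by simp

lemma isCompact_dyadicHolder {d : ℕ} (x y : Ed d) {R : ℝ} (hR : 0 ≤ R) :
    IsCompact (dyadicHolder x y R) := by
  have hcl : IsClosed {ω : PathSp d | ω 0 = x ∧ ω 1 = y} :=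
    (isClosed_eq (continuous_eval_const _) continuous_const).inter
      (isClosed_eq (continuous_eval_const _) continuous_const)
  rw [Subtype.isCompact_iff]
  set S : Set (PathSp d) := Subtype.val '' dyadicHolder x y R with hS
  have hSc : IsClosed S := hcl.isClosedEmbedding_subtypeVal.isClosedMap _
    (isClosed_dyadicHolder x y R)
  let e := (ContinuousMap.isometryEquivBoundedOfCompact unitInterval (Ed d)).toHomeomorph
  rw [← e.isCompact_image]
  refine BoundedContinuousFunction.arzela_ascoli₂ (Metric.closedBall x
    (2 * (d * (19 * R * (9 / 10) ^ 1)))) (isCompact_closedBall _ _) _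
    (e.isClosed_image.2 hSc) ?_ ?_
  · rintro _ t ⟨_, ⟨ω, hω, rfl⟩, rfl⟩
    change ω.1 t ∈ _
    rw [Metric.mem_closedBall]
    set h : unitInterval := ⟨(t : ℝ) / 2, by
      constructor <;> linarith [t.2.1, t.2.2]⟩ with hh
    have h1 := dyadicHolder_norm_sub_le hR hω (s := t) (t := h) le_rfl (by
      rw [Subtype.dist_eq, Real.dist_eq, hh, abs_le]
      constructor <;> linarith [t.2.1, t.2.2])
    have h2 := dyadicHolder_norm_sub_le hR hω (s := h) (t := 0) le_rfl (by
      rw [Subtype.dist_eq, Real.dist_eq, hh, abs_le]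
      constructor <;> simp <;> linarith [t.2.1, t.2.2])
    rw [ω.2.1] at h2
    linarith [dist_triangle (ω.1 t) (ω.1 h) x]
  · refine UniformEquicontinuous.equicontinuous ?_
    rw [Metric.uniformEquicontinuous_iff]
    intro ε hε
    have hlim : Tendsto (fun n : ℕ => d * (19 * R * (9 / 10 : ℝ) ^ n)) atTop (𝓝 0) := by
      have := ((tendsto_pow_atTop_nhds_zero_of_lt_one (r := (9 / 10 : ℝ)) (by norm_num)
        (by norm_num)).const_mul (19 * R)).const_mul (d : ℝ)
      simpa using this
    obtain ⟨n, hn, hn1⟩ := ((hlim.eventually_lt_const hε).and (eventually_ge_atTop 1)).exists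
    refine ⟨1 / 2 ^ n, by positivity, ?_⟩
    rintro s t hst ⟨_, ⟨_, ⟨ω, hω, rfl⟩, rfl⟩⟩
    exact (dyadicHolder_norm_sub_le hR hω hn1 hst.le).trans_lt hn


lemma dyadic_scaling_le {τ R : ℝ} (hτ : 0 < τ) (hR : 0 < R) (q k : ℕ) (hq : 4 ≤ q) :
    (τ ^ 2 * (1 / 2 ^ k)) ^ q / ((R * (9 / 10) ^ k) ^ 2) ^ q
      ≤ (τ ^ 2) ^ q / R ^ (2 * q) * (1 / 4) ^ k := by
  have h : (τ ^ 2 * (1 / 2 ^ k)) ^ q / ((R * (9 / 10) ^ k) ^ 2) ^ q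
      = (τ ^ 2) ^ q / R ^ (2 * q) * ((50 / 81) ^ q) ^ k := by
    have h1 : ((50 / 81 : ℝ) ^ q) ^ k = (1 / 2 ^ k) ^ q / (((9 / 10) ^ k) ^ 2) ^ q := by
      rw [← div_pow, ← pow_mul, mul_comm q k, pow_mul]
      congr 1
      rw [← one_div_pow, ← pow_mul, mul_comm k 2, pow_mul, ← div_pow]
      norm_num
    rw [h1, mul_pow, mul_pow, mul_pow, pow_mul R]
    field_simp
  rw [h]
  have h4 : (50 / 81 : ℝ) ^ q ≤ 1 / 4 :=
    (pow_le_pow_of_le_one (by norm_num) (by norm_num) hq).trans (by norm_num)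
  gcongr

lemma compl_dyadicHolder_subset {d : ℕ} (x y : Ed d) (R : ℝ) :
    (dyadicHolder x y R)ᶜ ⊆ ⋃ r : ℕ, ⋃ i ∈ Finset.range (2 ^ (r + 1)),
      ⋃ j ∈ (Finset.univ : Finset (Fin d)), {ω : Omega2 x y | R * (9 / 10) ^ (r + 1) <
        |(evalAt ω.1 (((i + 1 : ℕ) : ℝ) / 2 ^ (r + 1)) - evalAt ω.1 ((i : ℝ) / 2 ^ (r + 1))) j|} := by
  intro ω hω
  simp only [dyadicHolder, Set.mem_compl_iff, Set.mem_ofPred_eq, not_forall, not_le] at hω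
  obtain ⟨r, i, j, hr, hi, h⟩ := hω
  obtain ⟨r, rfl⟩ := Nat.exists_eq_add_of_le' hr
  simp only [Set.mem_iUnion]
  exact ⟨r, i, Finset.mem_range.2 hi, j, Finset.mem_univ j, h⟩

/-- The constant in the tail bound for `dyadicHolder`. -/
def tailConst (d : ℕ) : ℝ :=
  d * (2 * Real.exp (1 / 2) * (2 * (d + 4)).factorial * (2 * localConst d) ^ d)

lemma tailConst_nonneg {d : ℕ} (hd : 1 ≤ d) : 0 ≤ tailConst d := by
  have := localConst_pos hd
  unfold tailConst
  positivity

lemma VxyaN_compl_dyadicHolder_le {d : ℕ} (hd : 1 ≤ d) {x y : Ed d} {a : ℝ} (ha : 0 < a)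
    {z : Fin d → ℤ} (hz : ∀ j, (x - y) j = a * z j) {N : ℕ} (hN : 1 ≤ N)
    {R : ℝ} (hR : 0 < R) :
    VxyaN x y a N (dyadicHolder x y R)ᶜ
      ≤ ENNReal.ofReal (tailConst d * (a * √N) ^ (d + 8) / R ^ (2 * (d + 4))) := by
  have hC := localConst_pos hd
  have hNpos : (0 : ℝ) < N := by exact_mod_cast hN
  set τ : ℝ := a * √N with hτdef
  have hτ : 0 < τ := mul_pos ha (Real.sqrt_pos.2 hNpos)
  set B : ℝ := 2 * Real.exp (1 / 2) * (2 * (d + 4)).factorial * (2 * localConst d) ^ d *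
    τ ^ (d + 8) / R ^ (2 * (d + 4)) with hB
  have hB0 : 0 ≤ B := by positivity
  have hterm : ∀ r i : ℕ, i ∈ Finset.range (2 ^ (r + 1)) → ∀ j : Fin d,
      VxyaN x y a N {ω : Omega2 x y | R * (9 / 10) ^ (r + 1) <
        |(evalAt ω.1 (((i + 1 : ℕ) : ℝ) / 2 ^ (r + 1))
          - evalAt ω.1 ((i : ℝ) / 2 ^ (r + 1))) j|}
        ≤ ENNReal.ofReal (B * (1 / 4) ^ (r + 1)) := by
    intro r i hi j
    have hi' : ((i + 1 : ℕ) : ℝ) ≤ 2 ^ (r + 1) := by exact_mod_cast Finset.mem_range.1 hi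
    have hdiff : ((i + 1 : ℕ) : ℝ) / 2 ^ (r + 1) - (i : ℝ) / 2 ^ (r + 1)
        = 1 / 2 ^ (r + 1) := by
      push_cast; ring
    have hpos : (0 : ℝ) < 1 / 2 ^ (r + 1) := by positivity
    refine (VxyaN_increment_le hd ha hz hN (by positivity) (by linarith)
      ((div_le_one (by positivity)).2 hi') ?_ j (by positivity) (d + 4)).trans
      (ENNReal.ofReal_le_ofReal ?_)
    · rw [hdiff, pow_succ]
      have : (1 : ℝ) ≤ 2 ^ r := one_le_pow₀ (by norm_num)
      gcongr
      linarith
    · rw [hdiff, ← hτdef]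
      refine (mul_le_mul_of_nonneg_left
        (dyadic_scaling_le hτ hR (d + 4) (r + 1) (by omega)) (by positivity)).trans_eq ?_
      rw [hB, div_pow, ← pow_mul, show 2 * (d + 4) = d + (d + 8) by ring, pow_add τ]
      field_simp
  calc VxyaN x y a N (dyadicHolder x y R)ᶜ
      ≤ ∑' r : ℕ, ENNReal.ofReal (d * B * (1 / 2) ^ (r + 1)) := by
        refine (measure_mono (compl_dyadicHolder_subset x y R)).trans
          ((measure_iUnion_le _).trans (ENNReal.tsum_le_tsum fun r => ?_))
        calc _ ≤ ∑ i ∈ Finset.range (2 ^ (r + 1)), ∑ _j : Fin d,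
              ENNReal.ofReal (B * (1 / 4) ^ (r + 1)) :=
              (measure_biUnion_finset_le _ _).trans (Finset.sum_le_sum fun i hi =>
                (measure_biUnion_finset_le _ _).trans
                  (Finset.sum_le_sum fun j _ => hterm r i hi j))
          _ = _ := by
              simp only [Finset.sum_const, Finset.card_range, Finset.card_univ, Fintype.card_fin]
              rw [← ENNReal.ofReal_nsmul, ← ENNReal.ofReal_nsmul, nsmul_eq_mul, nsmul_eq_mul]
              congr 1
              have : (1 / 4 : ℝ) ^ (r + 1) * 2 ^ (r + 1) = (1 / 2) ^ (r + 1) := by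
                rw [← mul_pow]; norm_num
              rw [← this]
              push_cast
              ring
    _ = ENNReal.ofReal (d * B) := by
        have hs : HasSum (fun r : ℕ => d * B * (1 / 2 : ℝ) ^ (r + 1)) (d * B) := by
          have := (hasSum_geometric_two' (d * B))
          refine this.congr_fun fun r => ?_
          rw [pow_succ, one_div_pow]
          ring
        rw [← ENNReal.ofReal_tsum_of_nonneg (fun r => by positivity) hs.summable, hs.tsum_eq]
    _ = _ := by
        rw [hB, tailConst]
        congr 1
        ring

lemma exists_forall_VxyaN_compl_dyadicHolder_le {d : ℕ} (hd : 1 ≤ d) (x y : Ed d)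
    {η : ℝ} (hη : 0 < η) :
    ∃ R : ℝ, 0 ≤ R ∧ ∀ (a : ℝ) (z : Fin d → ℤ) (N : ℕ), 0 < a →
      (∀ j, (x - y) j = a * z j) → 1 ≤ N →
      VxyaN x y a N (dyadicHolder x y R)ᶜ ≤ ENNReal.ofReal η := by
  have hC := localConst_pos hd
  have hE := tailConst_nonneg hd
  set T : ℝ := 2 * localConst d * (1 + 1 / η) with hT
  have hT0 : 0 < T := by positivity
  set R : ℝ := 1 + tailConst d * T ^ (d + 8) / η with hRdef
  have hR1 : 1 ≤ R := le_add_of_nonneg_right (by positivity)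
  refine ⟨R, by linarith, fun a z N ha hz hN => ?_⟩
  have hτ : 0 < a * √N := mul_pos ha (Real.sqrt_pos.2 (by exact_mod_cast hN))
  rcases le_total (a * √N) T with h | h
  · refine (VxyaN_compl_dyadicHolder_le hd ha hz hN (by linarith)).trans
      (ENNReal.ofReal_le_ofReal ?_)
    rw [div_le_iff₀ (by positivity)]
    calc tailConst d * (a * √N) ^ (d + 8) ≤ tailConst d * T ^ (d + 8) := by gcongr
      _ ≤ η * R := by
        rw [hRdef, mul_add, mul_div_cancel₀ _ hη.ne']
        linarith
      _ ≤ η * R ^ (2 * (d + 4)) := by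
        gcongr
        exact le_self_pow₀ hR1 (by omega)
  · refine ((measure_mono (Set.subset_univ _)).trans (VxyaN_univ_le hd ha hz hN)).trans
      (ENNReal.ofReal_le_ofReal ?_)
    have hratio : 2 * localConst d / T = η / (η + 1) := by
      rw [hT]; field_simp
    have hle : 2 * localConst d / (a * √N) ≤ η / (η + 1) := by
      rw [← hratio]; gcongr
    have hlt : η / (η + 1) ≤ 1 := (div_le_one (by positivity)).2 (by linarith)
    calc (2 * localConst d / (a * √N)) ^ d ≤ 2 * localConst d / (a * √N) :=
          pow_le_of_le_one (by positivity) (hle.trans hlt) (by omega)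
      _ ≤ η / (η + 1) := hle
      _ ≤ η := div_le_self hη.le (by linarith)

lemma Vxya_le_of_forall_VxyaN_le {d : ℕ} (hd : 1 ≤ d) (x y : Ed d) {m a : ℝ} (hm : 0 < m)
    (ha : 0 < a) {A : Set (Omega2 x y)} (hA : MeasurableSet A) {b : ℝ≥0∞}
    (hb : ∀ N, 1 ≤ N → VxyaN x y a N A ≤ b) : Vxya x y m a A ≤ b := by
  have hdpos : (0 : ℝ) < d := by exact_mod_cast hd
  set q : ℝ := Real.exp (-m ^ 2 * a ^ 2 / (2 * d)) with hq
  have hq0 : 0 < q := Real.exp_pos _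
  have hq1 : q < 1 := by
    rw [hq, Real.exp_lt_one_iff, neg_mul, neg_div, neg_lt_zero]
    positivity
  have hpow : ∀ N : ℕ, Real.exp (-m ^ 2 * a ^ 2 * (N + 1) / (2 * d)) ≤ q ^ N := by
    intro N
    have : Real.exp (-m ^ 2 * a ^ 2 * (N + 1) / (2 * d)) = q ^ (N + 1) := by
      rw [hq, ← Real.exp_nat_mul]
      congr 1
      push_cast
      ring
    rw [this]
    exact pow_le_pow_of_le_one hq0.le hq1.le N.le_succ
  have hgeom : ENNReal.ofReal (1 - q) * ∑' N : ℕ, ENNReal.ofReal (q ^ N) = 1 := by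
    rw [← ENNReal.ofReal_tsum_of_nonneg (fun N => by positivity)
      (summable_geometric_of_lt_one hq0.le hq1), tsum_geometric_of_lt_one hq0.le hq1,
      ← ENNReal.ofReal_mul (by linarith), mul_inv_cancel₀ (by linarith), ENNReal.ofReal_one]
  calc Vxya x y m a A
      = ENNReal.ofReal (1 - q) * ∑' N : ℕ,
          ENNReal.ofReal (Real.exp (-m ^ 2 * a ^ 2 * (N + 1) / (2 * d))) *
            VxyaN x y a (N + 1) A := by
        simp only [Vxya, Measure.smul_apply, Measure.sum_apply _ hA, smul_eq_mul, hq]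
    _ ≤ ENNReal.ofReal (1 - q) * ∑' N : ℕ, ENNReal.ofReal (q ^ N) * b := by
        gcongr with N
        · exact hpow N
        · exact hb _ N.succ_pos
    _ = b := by rw [ENNReal.tsum_mul_right, ← mul_assoc, hgeom, one_mul]

/-- **Lemma 4.4**: the family `{V'_{x,y,a} : 0 < a < 1, x - y ∈ aℤ^d}` of finite
measures on `Ω(x,y)` is tight, for `x ≠ y`. -/
theorem Vxya_tight (d : ℕ) (hd : 1 ≤ d) (m : ℝ) (hm : 0 < m)
    (x y : Ed d) (hxy : x ≠ y) :
    ∀ η : ℝ, 0 < η → ∃ K : Set (Omega2 x y), IsCompact K ∧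
      ∀ a : ℝ, 0 < a → a < 1 → (∃ z : Fin d → ℤ, ∀ j, (x - y) j = a * (z j)) →
        Vxya x y m a Kᶜ < ENNReal.ofReal η := by
  intro η hη
  obtain ⟨R, hR, hbound⟩ := exists_forall_VxyaN_compl_dyadicHolder_le hd x y (half_pos hη)
  refine ⟨dyadicHolder x y R, isCompact_dyadicHolder x y hR, fun a ha _ ⟨z, hz⟩ => ?_⟩
  refine (Vxya_le_of_forall_VxyaN_le hd x y hm ha
    (isClosed_dyadicHolder x y R).measurableSet.compl
    fun N hN => hbound a z N ha hz hN).trans_lt ?_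
  exact (ENNReal.ofReal_lt_ofReal_iff hη).2 (half_lt_self hη)

end
end

section
/- Fix an integer d ≥ 1, m > 0, times 0 < t_1 < … < t_n ≤ 1 (with t_0 = 0) and vectors η_1, …, η_n ∈ ℝ^d. For N ∈ ℕ set N_0 = 0 and N_i = ⌈t_i N⌉ for 1 ≤ i ≤ n. Then lim_{a→0⁺} (1 − e^{−m²a²/(2d)}) Σ_{N=0}^∞ e^{−m²a²N/(2d)} ∏_{i=1}^n ( (1/d) Σ_{ν=1}^d cos(a (η_i)_ν) )^{N_i − N_{i−1}} = (m²/2) ∫_0^∞ e^{−m²t/2} exp( −(t/2) Σ_{i=1}^n (t_i − t_{i−1}) |η_i|² ) dt. (Convergence of the characteristic functions of the hypercubic lattice path measures to those of the Wiener-type continuum measure.) -/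
open MeasureTheory Filter Topology Real Set

noncomputable section

/-- A geometric sum against a bounded sequence, as a Laplace transform of the step function
`t ↦ f ⌊t / b⌋₊`. -/
theorem one_sub_exp_mul_tsum_eq_integral_floor {b c : ℝ} (hb : 0 < b) (hc : 0 < c) (f : ℕ → ℝ)
    (hf : ∀ N, |f N| ≤ 1) :
    (1 - exp (-c * b)) * ∑' N : ℕ, exp (-c * b * N) * f N =
      c * ∫ t in Ioi (0 : ℝ), exp (-c * t) * f ⌊t / b⌋₊ := by
  have hmono : Monotone fun N : ℕ => (N : ℝ) * b := fun i j hij => by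
    have : (i : ℝ) ≤ j := by exact_mod_cast hij
    exact mul_le_mul_of_nonneg_right this hb.le
  have hfloor : ∀ N : ℕ, ∀ t ∈ Ico ((N : ℝ) * b) (((N + 1 : ℕ) : ℝ) * b), ⌊t / b⌋₊ = N := by
    intro N t ht
    have h1 : (N : ℝ) ≤ t / b := (le_div_iff₀ hb).2 ht.1
    rw [Nat.floor_eq_iff ((Nat.cast_nonneg N).trans h1)]
    exact ⟨h1, (div_lt_iff₀ hb).2 (by simpa using ht.2)⟩
  have hunion : ⋃ N : ℕ, Ico ((N : ℝ) * b) (((N + 1 : ℕ) : ℝ) * b) = Ici (0 : ℝ) := by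
    ext t
    simp only [mem_iUnion, mem_Ico, mem_Ici]
    constructor
    · rintro ⟨N, h, -⟩
      exact (mul_nonneg (Nat.cast_nonneg N) hb.le).trans h
    · intro ht
      refine ⟨⌊t / b⌋₊, (le_div_iff₀ hb).1 (Nat.floor_le (div_nonneg ht hb.le)), ?_⟩
      have := (div_lt_iff₀ hb).1 (Nat.lt_floor_add_one (t / b))
      simpa using this
  have hint : IntegrableOn (fun t : ℝ => exp (-c * t) * f ⌊t / b⌋₊) (Ici 0) := by
    rw [integrableOn_Ici_iff_integrableOn_Ioi]
    refine (exp_neg_integrableOn_Ioi 0 hc).mono' ?_ (ae_of_all _ fun t => ?_)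
    · have : Measurable fun t : ℝ => f ⌊t / b⌋₊ :=
        (measurable_from_top (f := f)).comp (Nat.measurable_floor.comp (by fun_prop))
      exact ((by fun_prop : Measurable fun t : ℝ => exp (-c * t)).mul this).aestronglyMeasurable
    · rw [norm_mul, Real.norm_eq_abs, Real.norm_eq_abs, abs_exp]
      exact mul_le_of_le_one_right (exp_pos _).le (hf _)
  have hpiece : ∀ N : ℕ,
      c * ∫ t in Ico ((N : ℝ) * b) (((N + 1 : ℕ) : ℝ) * b), exp (-c * t) * f ⌊t / b⌋₊ =
        (1 - exp (-c * b)) * (exp (-c * b * N) * f N) := by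
    intro N
    rw [setIntegral_congr_fun measurableSet_Ico
      (g := fun t => exp (-c * t) * f N) (fun t ht => by simp only [hfloor N t ht]),
      integral_mul_const, integral_Ico_eq_integral_Ioc,
      ← intervalIntegral.integral_of_le (hmono (Nat.le_succ N)),
      intervalIntegral.integral_comp_mul_left (fun x => exp x) (neg_ne_zero.2 hc.ne'),
      integral_exp]
    have h1 : exp (-c * (((N + 1 : ℕ) : ℝ) * b)) = exp (-c * b * N) * exp (-c * b) := by
      rw [← exp_add]; congr 1; push_cast; ring
    have h2 : -c * ((N : ℝ) * b) = -c * b * N := by ring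
    rw [h1, h2, smul_eq_mul]
    field_simp
    ring
  have hdisj : Pairwise (Function.onFun Disjoint
      fun N : ℕ => Ico ((N : ℝ) * b) (((N + 1 : ℕ) : ℝ) * b)) := hmono.pairwise_disjoint_on_Ico_succ
  rw [← integral_Ici_eq_integral_Ioi, ← tsum_mul_left, ← hunion,
    integral_iUnion (fun _ => measurableSet_Ico) hdisj (hunion ▸ hint), ← tsum_mul_left]
  exact tsum_congr fun N => (hpiece N).symm

/-- If `(c - 1) / ε → x` and `k ε → y` with `ε → 0`, `ε ≠ 0`, then `c ^ k → exp (y x)`. -/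
theorem tendsto_pow_exp_of_tendsto {α : Type*} {l : Filter α} {c ε : α → ℝ} {k : α → ℕ} {x y : ℝ}
    (hε : Tendsto ε l (𝓝 0)) (hε0 : ∀ᶠ a in l, ε a ≠ 0)
    (hc : Tendsto (fun a => (c a - 1) / ε a) l (𝓝 x))
    (hk : Tendsto (fun a => (k a : ℝ) * ε a) l (𝓝 y)) :
    Tendsto (fun a => c a ^ k a) l (𝓝 (exp (y * x))) := by
  have hkc : Tendsto (fun a => (k a : ℝ) * (c a - 1)) l (𝓝 (y * x)) := by
    refine (hk.mul hc).congr' ?_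
    filter_upwards [hε0] with a ha
    field_simp
  have hc1 : Tendsto c l (𝓝 1) := by
    have h : Tendsto (fun a => ε a * ((c a - 1) / ε a) + 1) l (𝓝 (0 * x + 1)) :=
      (hε.mul hc).add_const 1
    rw [zero_mul, zero_add] at h
    refine h.congr' ?_
    filter_upwards [hε0] with a ha
    field_simp
    ring
  have hpos : ∀ᶠ a in l, 0 < c a := hc1.eventually (lt_mem_nhds one_pos)
  have hlower : Tendsto (fun a => (k a : ℝ) * (c a - 1) / c a) l (𝓝 (y * x)) := by
    have h := hkc.div hc1 one_ne_zero
    rwa [div_one] at h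
  have hlog : Tendsto (fun a => (k a : ℝ) * log (c a)) l (𝓝 (y * x)) := by
    refine tendsto_of_tendsto_of_tendsto_of_le_of_le' hlower hkc ?_ ?_
    · filter_upwards [hpos] with a ha
      have h := one_sub_inv_le_log_of_pos ha
      calc (k a : ℝ) * (c a - 1) / c a = k a * (1 - (c a)⁻¹) := by field_simp
        _ ≤ _ := mul_le_mul_of_nonneg_left h (Nat.cast_nonneg _)
    · filter_upwards [hpos] with a ha
      exact mul_le_mul_of_nonneg_left (log_le_sub_one_of_pos ha) (Nat.cast_nonneg _)
  refine ((continuous_exp.tendsto _).comp hlog).congr' ?_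
  filter_upwards [hpos] with a ha
  rw [Function.comp_apply, mul_comm, exp_mul, exp_log ha, rpow_natCast]

theorem cos_sub_one_eq_neg_sq_mul_sinc_sq (x : ℝ) :
    cos x - 1 = -(x ^ 2 / 2) * sinc (x / 2) ^ 2 := by
  rcases eq_or_ne x 0 with rfl | hx
  · simp
  · have h : cos x = 1 - 2 * sin (x / 2) ^ 2 := by
      have := cos_two_mul (x / 2)
      rw [mul_div_cancel₀ x two_ne_zero] at this
      rw [this, cos_sq']
      ring
    rw [sinc_of_ne_zero (by positivity), h]
    field_simp
    ring

/-- Second-order expansion at the origin of the characteristic function of a simple random walk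
step. -/
theorem tendsto_mean_cos_sub_one_div {d : ℕ} (hd : 1 ≤ d) (v : EuclideanSpace ℝ (Fin d)) :
    Tendsto (fun a : ℝ => ((1 / (d : ℝ)) * ∑ ν : Fin d, cos (a * v ν) - 1) / (a ^ 2 / d))
      (𝓝[>] 0) (𝓝 (-(‖v‖ ^ 2 / 2))) := by
  have hd0 : (d : ℝ) ≠ 0 := by positivity
  have hlim : Tendsto (fun a : ℝ => ∑ ν : Fin d, -(v ν ^ 2 / 2) * sinc (a * v ν / 2) ^ 2)
      (𝓝[>] 0) (𝓝 (-(‖v‖ ^ 2 / 2))) := by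
    have hcont : Continuous fun a : ℝ => ∑ ν : Fin d, -(v ν ^ 2 / 2) * sinc (a * v ν / 2) ^ 2 :=
      continuous_finsetSum _ fun ν _ =>
        continuous_const.mul ((continuous_sinc.comp (by fun_prop)).pow 2)
    have h := (hcont.tendsto 0).mono_left (nhdsWithin_le_nhds (s := Ioi 0))
    convert h using 2
    simp [EuclideanSpace.real_norm_sq_eq, Finset.sum_div]
  refine hlim.congr' ?_
  filter_upwards [self_mem_nhdsWithin] with a ha
  have ha0 : a ≠ 0 := (mem_Ioi.1 ha).ne'
  have hsum : ∑ ν : Fin d, cos (a * v ν) - d =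
      a ^ 2 * ∑ ν : Fin d, -(v ν ^ 2 / 2) * sinc (a * v ν / 2) ^ 2 := by
    rw [Finset.mul_sum]
    calc ∑ ν : Fin d, cos (a * v ν) - d = ∑ ν : Fin d, (cos (a * v ν) - 1) := by simp
      _ = _ := Finset.sum_congr rfl fun ν _ => by
        rw [cos_sub_one_eq_neg_sq_mul_sinc_sq]; ring
  have hmean : (1 / (d : ℝ)) * ∑ ν : Fin d, cos (a * v ν) - 1 =
      (∑ ν : Fin d, cos (a * v ν) - d) / d := by field_simp
  rw [hmean, hsum, eq_div_iff (by positivity)]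
  ring

theorem abs_mean_cos_le_one {d : ℕ} (v : Fin d → ℝ) (a : ℝ) :
    |(1 / (d : ℝ)) * ∑ ν : Fin d, cos (a * v ν)| ≤ 1 := by
  have h : |∑ ν : Fin d, cos (a * v ν)| ≤ d := by
    refine (Finset.abs_sum_le_sum_abs _ _).trans ?_
    simpa using Finset.sum_le_sum fun ν (_ : ν ∈ Finset.univ) => abs_cos_le_one (a * v ν)
  rw [abs_mul, abs_of_nonneg (by positivity), one_div_mul_eq_div]
  exact div_le_one_of_le₀ h (Nat.cast_nonneg d)

theorem tendsto_ceil_mul_floor_div_mul {α : Type*} {l : Filter α} {ε : α → ℝ}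
    (hε : Tendsto ε l (𝓝[>] 0)) {s t : ℝ} (hs : 0 ≤ s) (ht : 0 < t) :
    Tendsto (fun a => (⌈s * (⌊t / ε a⌋₊ : ℝ)⌉₊ : ℝ) * ε a) l (𝓝 (s * t)) := by
  have hdiv : Tendsto (fun a => t / ε a) l atTop := by
    simpa [div_eq_mul_inv] using (tendsto_inv_nhdsGT_zero.comp hε).const_mul_atTop ht
  have hfloor : Tendsto (fun a => (⌊t / ε a⌋₊ : ℝ)) l atTop :=
    tendsto_natCast_atTop_atTop.comp (tendsto_nat_floor_atTop.comp hdiv)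
  have h := (((tendsto_nat_ceil_mul_div_atTop hs).comp hfloor).mul
    ((tendsto_nat_floor_div_atTop (R := ℝ)).comp hdiv)).mul_const t
  rw [mul_one] at h
  refine h.congr' ?_
  filter_upwards [hfloor.eventually_gt_atTop 0, hε self_mem_nhdsWithin] with a ha hεa
  have hεa : ε a ≠ 0 := (mem_Ioi.1 hεa).ne'
  simp only [Function.comp_apply]
  field_simp

/-- **Convergence of the characteristic functions of the hypercubic lattice path
measures to those of the Wiener-type continuum measure.**
For `0 = t_0 < t_1 < ⋯ < t_n ≤ 1`, vectors `η_1, …, η_n ∈ ℝ^d` and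
`N_i = ⌈t_i N⌉` (`N_0 = 0`),
`(1 - e^{-m²a²/(2d)}) Σ_{N=0}^∞ e^{-m²a²N/(2d)}
  Π_{i=1}^n ((1/d) Σ_{ν=1}^d cos(a (η_i)_ν))^{N_i - N_{i-1}}`
tends, as `a → 0⁺`, to
`(m²/2) ∫_0^∞ e^{-m²t/2} exp(-(t/2) Σ_{i=1}^n (t_i - t_{i-1})|η_i|²) dt`. -/
theorem lattice_char_tendsto (d : ℕ) (hd : 1 ≤ d) (m : ℝ) (hm : 0 < m)
    (n : ℕ) (ts : ℕ → ℝ) (h0 : ts 0 = 0) (hmono : ∀ i < n, ts i < ts (i + 1))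
    (hle : ts n ≤ 1) (η : Fin n → EuclideanSpace ℝ (Fin d)) :
    Tendsto
      (fun a : ℝ =>
        (1 - Real.exp (-m ^ 2 * a ^ 2 / (2 * d))) *
          ∑' N : ℕ, Real.exp (-m ^ 2 * a ^ 2 * N / (2 * d)) *
            ∏ i : Fin n,
              ((1 / (d : ℝ)) * ∑ ν : Fin d, Real.cos (a * η i ν)) ^
                (Nat.ceil (ts ((i : ℕ) + 1) * N) - Nat.ceil (ts (i : ℕ) * N)))
      (nhdsWithin 0 (Set.Ioi 0))
      (nhds ((m ^ 2 / 2) *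
        ∫ t in Set.Ioi (0 : ℝ), Real.exp (-m ^ 2 * t / 2) *
          Real.exp (-(t / 2) *
            ∑ i : Fin n, (ts ((i : ℕ) + 1) - ts (i : ℕ)) * ‖η i‖ ^ 2))) := by
  have hd0 : (0 : ℝ) < d := by positivity
  have hts : ∀ i ≤ n, 0 ≤ ts i := by
    intro i
    induction i with
    | zero => exact fun _ => h0.ge
    | succ i ih => exact fun hi => (ih (by omega)).trans (hmono i hi).le
  set G : ℝ → ℕ → ℝ := fun a N => ∏ i : Fin n,
    ((1 / (d : ℝ)) * ∑ ν : Fin d, Real.cos (a * η i ν)) ^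
      (Nat.ceil (ts ((i : ℕ) + 1) * N) - Nat.ceil (ts (i : ℕ) * N)) with hG
  have hG1 : ∀ a N, |G a N| ≤ 1 := fun a N => by
    rw [hG, Finset.abs_prod]
    refine Finset.prod_le_one (fun _ _ => abs_nonneg _) fun i _ => ?_
    rw [abs_pow]
    exact pow_le_one₀ (abs_nonneg _) (abs_mean_cos_le_one _ _)
  have hε : Tendsto (fun a : ℝ => a ^ 2 / d) (𝓝[>] 0) (𝓝[>] 0) := by
    refine tendsto_nhdsWithin_iff.2 ⟨?_, ?_⟩
    · have hcont : Continuous fun a : ℝ => a ^ 2 / d := by fun_prop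
      simpa using (hcont.tendsto 0).mono_left (nhdsWithin_le_nhds (s := Ioi 0))
    · filter_upwards [self_mem_nhdsWithin] with a ha
      have : 0 < a := ha
      exact mem_Ioi.2 (by positivity)
  have hGlim : ∀ t : ℝ, 0 < t → Tendsto (fun a => G a ⌊t / (a ^ 2 / d)⌋₊) (𝓝[>] 0)
      (𝓝 (exp (-(t / 2) * ∑ i : Fin n, (ts ((i : ℕ) + 1) - ts (i : ℕ)) * ‖η i‖ ^ 2))) := by
    intro t ht
    rw [Finset.mul_sum, exp_sum]
    refine tendsto_finsetProd _ fun i _ => ?_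
    have hk := (tendsto_ceil_mul_floor_div_mul hε (hts (i + 1) i.2) ht).sub
      (tendsto_ceil_mul_floor_div_mul hε (hts i i.2.le) ht)
    have h := tendsto_pow_exp_of_tendsto
      (k := fun a => ⌈ts ((i : ℕ) + 1) * (⌊t / (a ^ 2 / d)⌋₊ : ℝ)⌉₊ -
        ⌈ts (i : ℕ) * (⌊t / (a ^ 2 / d)⌋₊ : ℝ)⌉₊)
      (tendsto_nhdsWithin_iff.1 hε).1
      ((tendsto_nhdsWithin_iff.1 hε).2.mono fun a ha => (mem_Ioi.1 ha).ne')
      (tendsto_mean_cos_sub_one_div hd (η i)) (hk.congr fun a => ?_)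
    · convert h using 3
      ring
    · rw [Nat.cast_sub (Nat.ceil_mono
        (mul_le_mul_of_nonneg_right (hmono i i.2).le (Nat.cast_nonneg _))), sub_mul]
  have hc : 0 < m ^ 2 / 2 := by positivity
  have hlim : Tendsto (fun a : ℝ => m ^ 2 / 2 *
      ∫ t in Ioi (0 : ℝ), exp (-(m ^ 2 / 2) * t) * G a ⌊t / (a ^ 2 / d)⌋₊) (𝓝[>] 0)
      (𝓝 (m ^ 2 / 2 * ∫ t in Ioi (0 : ℝ), exp (-(m ^ 2 / 2) * t) *
        exp (-(t / 2) * ∑ i : Fin n, (ts ((i : ℕ) + 1) - ts (i : ℕ)) * ‖η i‖ ^ 2))) := by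
    refine Tendsto.const_mul _ (tendsto_integral_filter_of_dominated_convergence
      (fun t => exp (-(m ^ 2 / 2) * t)) ?_ ?_ (exp_neg_integrableOn_Ioi 0 hc) ?_)
    · refine Eventually.of_forall fun a => Measurable.aestronglyMeasurable ?_
      have : Measurable fun t : ℝ => G a ⌊t / (a ^ 2 / d)⌋₊ :=
        (measurable_from_top (f := G a)).comp (Nat.measurable_floor.comp (by fun_prop))
      exact (by fun_prop : Measurable fun t : ℝ => exp (-(m ^ 2 / 2) * t)).mul this
    · refine Eventually.of_forall fun a => ae_of_all _ fun t => ?_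
      rw [norm_mul, Real.norm_eq_abs, Real.norm_eq_abs, abs_exp]
      exact mul_le_of_le_one_right (exp_pos _).le (hG1 _ _)
    · filter_upwards [ae_restrict_mem measurableSet_Ioi] with t ht
      exact (hGlim t ht).const_mul _
  have hexp : ∀ t : ℝ, -m ^ 2 * t / 2 = -(m ^ 2 / 2) * t := fun t => by ring
  simp only [hexp]
  refine hlim.congr' ?_
  filter_upwards [self_mem_nhdsWithin] with a ha
  have ha0 : 0 < a := ha
  rw [← one_sub_exp_mul_tsum_eq_integral_floor (by positivity) hc (G a) (hG1 a)]
  have h1 : -(m ^ 2 / 2) * (a ^ 2 / d) = -m ^ 2 * a ^ 2 / (2 * d) := by ring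
  have h2 : ∀ N : ℕ, -m ^ 2 * a ^ 2 / (2 * d) * N = -m ^ 2 * a ^ 2 * N / (2 * d) :=
    fun N => by ring
  simp only [h1, h2, hG]

end
end

section
/- (Proposition 5.2) Fix an integer d ≥ 1 and x, y ∈ ℝ^d with x ≠ y. The collection of sets Z̄(A_1, …, A_n), where n ranges over positive integers and A_1, …, A_n over open Euclidean balls in ℝ^d (and Z̄ denotes the closure of Z(A_1,…,A_n) in Ω̄(x,y)), generates the Borel σ-algebra of the metric space Ω̄(x,y); moreover, the countable subcollection with balls of rational centers and rational radii already generates it, since every open subset of Ω̄(x,y) is a countable union of such sets Z̄(A_1,…,A_n). -/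
open MeasureTheory Filter Topology Real Set
open scoped RealInnerProductSpace ENNReal unitInterval

noncomputable section

/-- The reparametrization pseudo-distance
`d̄(ω,ω') = inf { d(ω, ω'∘φ) : φ an increasing homeomorphism of [0,1] }`. -/
def quotDist {d : ℕ} (ω ω' : PathSp d) : ℝ :=
  ⨅ φ : {φ : unitInterval ≃ₜ unitInterval // Monotone ⇑φ},
    dist ω (ω'.comp ⟨⇑φ.1, φ.1.continuous⟩)

open scoped Classical in
/-- The escape time `sup {t ∈ [t₀,1] : f([t₀,t]) ⊆ A}`, with the convention
`sup ∅ = 1`. -/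
def escTime {d : ℕ} (f : ℝ → Ed d) (A : Set (Ed d)) (t0 : ℝ) : ℝ :=
  if ({t | t ∈ Set.Icc t0 1 ∧ ∀ u ∈ Set.Icc t0 t, f u ∈ A}).Nonempty then
    sSup {t | t ∈ Set.Icc t0 1 ∧ ∀ u ∈ Set.Icc t0 t, f u ∈ A}
  else 1

/-- The sequence of successive escape times `τ_0 = 0`,
`τ_{i+1} = sup {t ≥ τ_i : f([τ_i,t]) ⊆ A_{i+1}}` (`A` being indexed from `0` here). -/
def tauSeq {d : ℕ} (f : ℝ → Ed d) (A : ℕ → Set (Ed d)) : ℕ → ℝ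
  | 0 => 0
  | i + 1 => escTime f (A i) (tauSeq f A i)

/-- The defining property of `Z(A_1,…,A_n)` for a parametrized path `ω`:
the successive escape times satisfy `τ_1 < τ_2 < ⋯ < τ_{n-1} < τ_n = 1`. -/
def ZcondPath {d : ℕ} {x y : Ed d} (ω : Omega2 x y) {n : ℕ}
    (A : Fin n → Set (Ed d)) : Prop :=
  (∀ i : ℕ, 1 ≤ i → i < n →
      tauSeq (evalAt ω.1) (fun j => if h : j < n then A ⟨j, h⟩ else ∅) i <
        tauSeq (evalAt ω.1) (fun j => if h : j < n then A ⟨j, h⟩ else ∅) (i + 1))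
    ∧ tauSeq (evalAt ω.1) (fun j => if h : j < n then A ⟨j, h⟩ else ∅) n = 1

/-- The set `Z(A_1,…,A_n)` of geometric (unparametrized) paths from `x` to `y`,
as a subset of the quotient space realized by `pr : Ω(x,y) → Q`. -/
def Zset {d : ℕ} {x y : Ed d} {Q : Type*} (pr : Omega2 x y → Q) {n : ℕ}
    (A : Fin n → Set (Ed d)) : Set Q :=
  {q | ∃ ω : Omega2 x y, pr ω = q ∧ ZcondPath ω A}

/-- A geometric path `q` is tangent to the boundary of `A` (at some point `z ∈ ∂A`)
if it has a parametrization `ω` with `ω(t₀) = z` and `ω(t) ∈ closure A` for all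
`0 < |t - t₀| < ε`, for some `ε > 0`. -/
def TangentAt {d : ℕ} {x y : Ed d} {Q : Type*} (pr : Omega2 x y → Q) (q : Q)
    (A : Set (Ed d)) : Prop :=
  ∃ ω : Omega2 x y, pr ω = q ∧ ∃ z ∈ frontier A, ∃ t0 : unitInterval,
    ω.1 t0 = z ∧ ∃ ε : ℝ, 0 < ε ∧ ∀ t : unitInterval,
      t ≠ t0 → |(t : ℝ) - (t0 : ℝ)| < ε → ω.1 t ∈ closure A


/-- The collection of closures of `Z`-sets built from finitely many open balls. -/
def ZballColl {d : ℕ} {x y : Ed d} {Q : Type*} [MetricSpace Q]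
    (pr : Omega2 x y → Q) : Set (Set Q) :=
  {S | ∃ (n : ℕ) (_ : 0 < n) (c : Fin n → Ed d) (r : Fin n → ℝ),
    (∀ i, 0 < r i) ∧ S = closure (Zset pr fun i => Metric.ball (c i) (r i))}

/-- The countable subcollection of closures of `Z`-sets built from open balls with
rational centers and rational radii. -/
def ZballRatColl {d : ℕ} {x y : Ed d} {Q : Type*} [MetricSpace Q]
    (pr : Omega2 x y → Q) : Set (Set Q) :=
  {S | ∃ (n : ℕ) (_ : 0 < n) (c : Fin n → Fin d → ℚ) (r : Fin n → ℚ),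
    (∀ i, 0 < r i) ∧ S = closure (Zset pr fun i =>
      Metric.ball ((WithLp.equiv 2 (Fin d → ℝ)).symm fun j => ((c i j : ℝ))) ((r i : ℝ)))}

section EscapeTimes

variable {d : ℕ} {f : ℝ → Ed d} {A B : Set (Ed d)} {t0 : ℝ}

lemma escTime_le_one (f : ℝ → Ed d) (A : Set (Ed d)) (t0 : ℝ) : escTime f A t0 ≤ 1 := by
  unfold escTime
  split_ifs with h
  · exact csSup_le h fun t ht => ht.1.2
  · exact le_rfl

lemma escTime_of_notMem (h : f t0 ∉ A) : escTime f A t0 = 1 := by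
  unfold escTime
  rw [if_neg]
  rintro ⟨t, ht, hA⟩
  exact h (hA t0 ⟨le_rfl, ht.1⟩)

lemma escTime_of_mem (ht0 : t0 ≤ 1) (h : f t0 ∈ A) :
    escTime f A t0 = sSup {t | t ∈ Set.Icc t0 1 ∧ ∀ u ∈ Set.Icc t0 t, f u ∈ A} := by
  unfold escTime
  rw [if_pos]
  refine ⟨t0, ⟨le_rfl, ht0⟩, fun u hu => ?_⟩
  rwa [le_antisymm hu.2 hu.1]

lemma le_escTime_of_forall_mem {t : ℝ} (ht : t ∈ Set.Icc t0 1)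
    (h : ∀ u ∈ Set.Icc t0 t, f u ∈ A) : t ≤ escTime f A t0 := by
  rw [escTime_of_mem (ht.1.trans ht.2) (h t0 ⟨le_rfl, ht.1⟩)]
  exact le_csSup ⟨1, fun t ht => ht.1.2⟩ ⟨ht, h⟩

lemma le_escTime (ht0 : t0 ≤ 1) : t0 ≤ escTime f A t0 := by
  by_cases h : f t0 ∈ A
  · refine le_escTime_of_forall_mem ⟨le_rfl, ht0⟩ fun u hu => ?_
    rwa [le_antisymm hu.2 hu.1]
  · rwa [escTime_of_notMem h]

lemma mem_of_lt_escTime (ht0 : t0 ≤ 1) (h : f t0 ∈ A) {u : ℝ} (hu : t0 ≤ u)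
    (hu' : u < escTime f A t0) : f u ∈ A := by
  rw [escTime_of_mem ht0 h] at hu'
  obtain ⟨t, ht, hut⟩ := exists_lt_of_lt_csSup (by
    exact ⟨t0, ⟨le_rfl, ht0⟩, fun v hv => by rwa [le_antisymm hv.2 hv.1]⟩) hu'
  exact ht.2 u ⟨hu, hut.le⟩

lemma escTime_mono (ht0 : t0 ≤ 1) (h : f t0 ∈ A) (hAB : A ⊆ B) :
    escTime f A t0 ≤ escTime f B t0 := by
  rw [escTime_of_mem ht0 h]
  refine csSup_le ⟨t0, ⟨le_rfl, ht0⟩, fun v hv => by rwa [le_antisymm hv.2 hv.1]⟩ ?_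
  exact fun t ht => le_escTime_of_forall_mem ht.1 fun u hu => hAB (ht.2 u hu)

/-- A continuous path which is in the open set `A` on `[t0, t]`, `t < 1`, stays in `A` strictly
beyond `t`. -/
lemma lt_escTime (hf : Continuous f) (hA : IsOpen A) {t : ℝ} (ht0 : t0 ≤ t) (ht : t < 1)
    (h : ∀ u ∈ Set.Icc t0 t, f u ∈ A) : t < escTime f A t0 := by
  obtain ⟨ε, hε, hball⟩ := Metric.isOpen_iff.1 (hA.preimage hf) t (h t ⟨ht0, le_rfl⟩)
  have hpos : 0 < min (ε / 2) (1 - t) := lt_min (by linarith) (by linarith)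
  have h1 := min_le_left (ε / 2) (1 - t)
  have h2 := min_le_right (ε / 2) (1 - t)
  refine lt_of_lt_of_le (lt_add_of_pos_right t hpos)
    (le_escTime_of_forall_mem ⟨by linarith, by linarith⟩ fun u hu => ?_)
  rcases le_total u t with hut | hut
  · exact h u ⟨hu.1, hut⟩
  · refine hball ?_
    rw [Metric.mem_ball, Real.dist_eq, abs_of_nonneg (by linarith)]
    linarith [hu.2]

lemma lt_escTime_of_mem (hf : Continuous f) (hA : IsOpen A) (ht0 : t0 < 1) (h : f t0 ∈ A) :
    t0 < escTime f A t0 :=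
  lt_escTime hf hA le_rfl ht0 fun u hu => by rwa [le_antisymm hu.2 hu.1]

lemma notMem_of_escTime_lt_one (hf : Continuous f) (hA : IsOpen A) (ht0 : t0 ≤ 1)
    (h : f t0 ∈ A) (hlt : escTime f A t0 < 1) : f (escTime f A t0) ∉ A := by
  intro hmem
  refine lt_irrefl _ (lt_escTime hf hA (le_escTime ht0) hlt fun u hu => ?_)
  rcases hu.2.lt_or_eq with hlt' | heq
  · exact mem_of_lt_escTime ht0 h hu.1 hlt'
  · rwa [heq]

lemma mem_closure_of_le_escTime (hf : Continuous f) (hA : IsOpen A) (ht0 : t0 < 1)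
    (h : f t0 ∈ A) {u : ℝ} (hu : u ∈ Set.Icc t0 (escTime f A t0)) : f u ∈ closure A := by
  have hlt := lt_escTime_of_mem hf hA ht0 h
  have hsub : Set.Ico t0 (escTime f A t0) ⊆ f ⁻¹' A :=
    fun v hv => mem_of_lt_escTime ht0.le h hv.1 hv.2
  rw [← closure_Ico hlt.ne] at hu
  exact hf.closure_preimage_subset A (closure_mono hsub hu)

/-- If the path starts in the first set and the last set contains the closure of the previous
one, then the condition defining `Z` determines times at which the path passes from one set to
the next. -/
lemma tauSeq_lt_and_mem_closure (hf : Continuous f) {A : ℕ → Set (Ed d)} {n : ℕ}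
    (hopen : ∀ i < n, IsOpen (A i)) (h0 : f 0 ∈ A 0)
    (hlast : ∀ i, i + 2 = n → closure (A i) ⊆ A (i + 1))
    (hlt : ∀ i, 1 ≤ i → i < n → tauSeq f A i < tauSeq f A (i + 1)) :
    ∀ i < n, tauSeq f A i < tauSeq f A (i + 1) ∧
      ∀ u ∈ Set.Icc (tauSeq f A i) (tauSeq f A (i + 1)), f u ∈ closure (A i) := by
  have hlt1 : ∀ i < n, tauSeq f A i < 1 := by
    intro i hi
    rcases Nat.eq_zero_or_pos i with rfl | hpos
    · exact zero_lt_one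
    · exact (hlt i hpos hi).trans_le (escTime_le_one _ _ _)
  have hmem' : ∀ i, i + 1 < n → f (tauSeq f A i) ∈ A i := by
    intro i hi
    by_contra hcon
    exact (hlt1 (i + 1) hi).ne (escTime_of_notMem hcon)
  have hmem : ∀ i < n, f (tauSeq f A i) ∈ A i := by
    intro i hi
    rcases Nat.lt_or_ge (i + 1) n with h | h
    · exact hmem' i h
    · rcases i with _ | i
      · exact h0
      · refine hlast i (by omega) ?_
        exact mem_closure_of_le_escTime hf (hopen i (by omega)) (hlt1 i (by omega))
          (hmem' i hi) ⟨le_escTime (hlt1 i (by omega)).le, le_rfl⟩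
  exact fun i hi => ⟨lt_escTime_of_mem hf (hopen i hi) (hlt1 i hi) (hmem i hi),
    fun u hu => mem_closure_of_le_escTime hf (hopen i hi) (hlt1 i hi) (hmem i hi) hu⟩

end EscapeTimes

section Reparametrization

/-- The piecewise linear order automorphism of `ℝ` fixing `(-∞, a]` and of slope `k` on
`[a, ∞)`. -/
lemma exists_orderIso_slope (a k : ℝ) (hk : 0 < k) :
    ∃ g : ℝ ≃o ℝ, (∀ u ≤ a, g u = u) ∧ ∀ u, a ≤ u → g u = a + k * (u - a) := by
  set F : ℝ → ℝ := fun u => min u a + k * max (u - a) 0 with hF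
  have hle : ∀ u ≤ a, F u = u := fun u hu => by
    simp [hF, min_eq_left hu, max_eq_right (sub_nonpos.2 hu)]
  have hge : ∀ u, a ≤ u → F u = a + k * (u - a) := fun u hu => by
    simp [hF, min_eq_right hu, max_eq_left (sub_nonneg.2 hu)]
  have hmono : StrictMono F := by
    refine StrictMonoOn.Iic_union_Ici (a := a) (fun u hu v hv huv => ?_) fun u hu v hv huv => ?_
    · rwa [hle u hu, hle v hv]
    · rw [hge u hu, hge v hv]
      gcongr
  have hsurj : Function.Surjective F := by
    intro v
    rcases le_total v a with h | h
    · exact ⟨v, hle v h⟩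
    · refine ⟨a + (v - a) / k, ?_⟩
      rw [hge _ (le_add_of_nonneg_right (div_nonneg (sub_nonneg.2 h) hk.le))]
      field_simp
      ring
  exact ⟨hmono.orderIsoOfSurjective F hsurj, hle, hge⟩

/-- Two finite strictly increasing sequences of reals are related by an order automorphism
of `ℝ`. -/
lemma exists_orderIso_apply_eq (s t : ℕ → ℝ) (n : ℕ) (hs : ∀ i < n, s i < s (i + 1))
    (ht : ∀ i < n, t i < t (i + 1)) : ∃ e : ℝ ≃o ℝ, ∀ i ≤ n, e (s i) = t i := by
  induction n with
  | zero =>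
    refine ⟨OrderIso.addRight (t 0 - s 0), fun i hi => ?_⟩
    obtain rfl : i = 0 := by omega
    simp
  | succ n ih =>
    obtain ⟨e, he⟩ := ih (fun i hi => hs i (by omega)) fun i hi => ht i (by omega)
    have hpos : 0 < e (s (n + 1)) - t n := by
      rw [← he n le_rfl, sub_pos]
      exact e.strictMono (hs n (by omega))
    have hpos' : 0 < t (n + 1) - t n := sub_pos.2 (ht n (by omega))
    obtain ⟨g, hg1, hg2⟩ := exists_orderIso_slope (t n) _ (div_pos hpos' hpos)
    refine ⟨e.trans g, fun i hi => ?_⟩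
    rw [OrderIso.trans_apply]
    rcases Nat.lt_or_ge n i with h | h
    · obtain rfl : i = n + 1 := by omega
      rw [hg2 _ (by linarith), div_mul_cancel₀ _ hpos.ne']
      ring
    · rw [he i h, hg1]
      refine Nat.le_induction (P := fun m _ => m ≤ n → t i ≤ t m) (fun _ => le_rfl)
        (fun m _ ihm hm => ?_) n h le_rfl
      exact (ihm (by omega)).trans (ht m (by omega)).le

/-- An order automorphism of `ℝ` fixing `0` and `1` restricts to an increasing homeomorphism of
`[0,1]`. -/
lemma exists_homeomorph_of_orderIso (e : ℝ ≃o ℝ) (h0 : e 0 = 0) (h1 : e 1 = 1) :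
    ∃ φ : unitInterval ≃ₜ unitInterval, Monotone φ ∧ ∀ u, (φ u : ℝ) = e u := by
  have h0' : e.symm 0 = 0 := by rw [OrderIso.symm_apply_eq, h0]
  have h1' : e.symm 1 = 1 := by rw [OrderIso.symm_apply_eq, h1]
  let ψ : unitInterval ≃o unitInterval :=
    { toFun := fun u => ⟨e u, h0 ▸ e.monotone u.2.1, h1 ▸ e.monotone u.2.2⟩
      invFun := fun u => ⟨e.symm u, h0' ▸ e.symm.monotone u.2.1, h1' ▸ e.symm.monotone u.2.2⟩
      left_inv := fun u => by simp
      right_inv := fun u => by simp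
      map_rel_iff' := e.le_iff_le }
  exact ⟨ψ.toHomeomorph, ψ.monotone, fun u => rfl⟩

end Reparametrization

section ZSets

variable {d : ℕ}

lemma continuous_evalAt_s17 (ω : PathSp d) : Continuous (evalAt ω) :=
  ω.continuous.comp continuous_projIcc

lemma evalAt_coe (ω : PathSp d) (u : unitInterval) : evalAt ω u = ω u := by
  rw [evalAt, Set.projIcc_val]

lemma evalAt_zero (ω : PathSp d) : evalAt ω 0 = ω 0 :=
  evalAt_coe ω 0

lemma tauSeq_congr (f : ℝ → Ed d) {A B : ℕ → Set (Ed d)} {n : ℕ} (h : ∀ j < n, A j = B j) :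
    tauSeq f A n = tauSeq f B n := by
  induction n with
  | zero => rfl
  | succ n ih =>
    rw [tauSeq, tauSeq, ih fun j hj => h j (by omega), h n (by omega)]

lemma ZcondPath_iff {x y : Ed d} (ω : Omega2 x y) (A : ℕ → Set (Ed d)) (n : ℕ) :
    ZcondPath ω (fun i : Fin n => A i) ↔
      (∀ i, 1 ≤ i → i < n → tauSeq (evalAt ω.1) A i < tauSeq (evalAt ω.1) A (i + 1)) ∧
        tauSeq (evalAt ω.1) A n = 1 := by
  have key : ∀ i ≤ n, tauSeq (evalAt ω.1) (fun j => if j < n then A j else ∅) i =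
      tauSeq (evalAt ω.1) A i :=
    fun i hi => tauSeq_congr _ fun j hj => if_pos (by omega)
  unfold ZcondPath
  simp only [dite_eq_ite]
  rw [key n le_rfl]
  refine and_congr_left fun _ => forall_congr' fun i => forall_congr' fun _ =>
    forall_congr' fun hi => ?_
  rw [key i hi.le, key (i + 1) hi]

lemma exists_mem_Icc_succ (s : ℕ → ℝ) {n : ℕ} (hn : 0 < n) {u : ℝ} (h0 : s 0 ≤ u)
    (h1 : u ≤ s n) : ∃ i < n, u ∈ Set.Icc (s i) (s (i + 1)) := by
  induction n, hn using Nat.le_induction with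
  | base => exact ⟨0, zero_lt_one, h0, h1⟩
  | succ n hn ih =>
    rcases le_total u (s n) with h | h
    · obtain ⟨i, hi, hu⟩ := ih h
      exact ⟨i, by omega, hu⟩
    · exact ⟨n, by omega, h, h1⟩

/-- Two paths passing successively through the same sets of diameter at most `R` are at
reparametrization distance at most `R`. -/
lemma quotDist_le_of_ZcondPath {x y : Ed d} {ω ω' : Omega2 x y} {A : ℕ → Set (Ed d)} {n : ℕ}
    {R : ℝ} (hn : 0 < n) (hopen : ∀ i < n, IsOpen (A i)) (h0 : x ∈ A 0)
    (hlast : ∀ i, i + 2 = n → closure (A i) ⊆ A (i + 1))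
    (hR : ∀ i < n, ∀ z ∈ closure (A i), ∀ w ∈ closure (A i), dist z w ≤ R)
    (hω : ZcondPath ω fun i : Fin n => A i) (hω' : ZcondPath ω' fun i : Fin n => A i) :
    quotDist ω.1 ω'.1 ≤ R := by
  rw [ZcondPath_iff] at hω hω'
  have hs := tauSeq_lt_and_mem_closure (continuous_evalAt_s17 ω.1) hopen
    (by rwa [evalAt_zero, ω.2.1]) hlast hω.1
  have ht := tauSeq_lt_and_mem_closure (continuous_evalAt_s17 ω'.1) hopen
    (by rwa [evalAt_zero, ω'.2.1]) hlast hω'.1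
  obtain ⟨e, he⟩ := exists_orderIso_apply_eq _ _ n (fun i hi => (hs i hi).1)
    fun i hi => (ht i hi).1
  obtain ⟨φ, hφ, hφe⟩ := exists_homeomorph_of_orderIso e (he 0 (Nat.zero_le n)) (by
    have := he n le_rfl
    rwa [hω.2, hω'.2] at this)
  have hR0 : 0 ≤ R := dist_nonneg.trans
    (hR 0 hn x (subset_closure h0) x (subset_closure h0))
  refine (ciInf_le ⟨0, ?_⟩ (⟨φ, hφ⟩ : {φ : unitInterval ≃ₜ unitInterval // Monotone ⇑φ})).trans ?_
  · rintro _ ⟨ψ, rfl⟩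
    exact dist_nonneg
  · refine (ContinuousMap.dist_le hR0).2 fun u => ?_
    obtain ⟨i, hi, hu⟩ := exists_mem_Icc_succ (tauSeq (evalAt ω.1) A) hn (u := u) u.2.1
      (u.2.2.trans_eq hω.2.symm)
    have hu' : (φ u : ℝ) ∈
        Set.Icc (tauSeq (evalAt ω'.1) A i) (tauSeq (evalAt ω'.1) A (i + 1)) := by
      rw [hφe, ← he i hi.le, ← he (i + 1) hi]
      exact ⟨e.monotone hu.1, e.monotone hu.2⟩
    have h1 := (hs i hi).2 u hu
    have h2 := (ht i hi).2 (φ u) hu'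
    rw [evalAt_coe] at h1 h2
    exact hR i hi _ h1 _ h2

/-- If every escape set contains the ball of fixed radius `δ` around the point where the path
enters it, then the path is exhausted after finitely many escapes. -/
lemma exists_tauSeq_eq_one {f : ℝ → Ed d} (hf : Continuous f) {A : ℕ → Set (Ed d)}
    (hopen : ∀ i, IsOpen (A i)) {δ : ℝ} (hδ : 0 < δ)
    (hball : ∀ i, Metric.ball (f (tauSeq f A i)) δ ⊆ A i) :
    ∃ n, tauSeq f A n = 1 := by
  by_contra! hne
  have hlt : ∀ i, tauSeq f A i < 1 := by
    intro i
    rcases i with _ | i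
    · exact zero_lt_one
    · exact (escTime_le_one _ _ _).lt_of_ne (hne (i + 1))
  have hmono : Monotone (tauSeq f A) :=
    monotone_nat_of_le_succ fun i => le_escTime (hlt i).le
  have hlim := tendsto_atTop_ciSup hmono ⟨1, by rintro _ ⟨i, rfl⟩; exact (hlt i).le⟩
  have hlim' := (hf.tendsto _).comp hlim
  have hdist := (hlim'.comp (tendsto_add_atTop_nat 1)).dist hlim'
  rw [dist_self] at hdist
  obtain ⟨i, hi⟩ := (hdist.eventually (gt_mem_nhds hδ)).exists
  exact notMem_of_escTime_lt_one hf (hopen i) (hlt i).le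
    (hball i (Metric.mem_ball_self hδ)) (hlt (i + 1)) (hball i hi)

/-- The point of `ℝ^d` with given rational coordinates. -/
def ratPoint (v : Fin d → ℚ) : Ed d :=
  (WithLp.equiv 2 (Fin d → ℝ)).symm fun j => (v j : ℝ)

lemma denseRange_ratPoint : DenseRange (ratPoint (d := d)) := by
  have h : DenseRange (Pi.map fun (_ : Fin d) (q : ℚ) => (q : ℝ)) :=
    DenseRange.piMap fun _ => Rat.denseRange_cast
  exact ((WithLp.equiv 2 (Fin d → ℝ)).symm.surjective.denseRange).comp h
    (PiLp.continuous_toLp 2 _)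

/-- Every path lies in some `Z`-set of balls with rational centers and radius at most `4 ε`,
such that the last ball contains the closure of the previous one. -/
lemma exists_rat_balls_ZcondPath {x y : Ed d} (ω : Omega2 x y) {ε : ℚ} (hε : 0 < ε) :
    ∃ (n : ℕ) (C : ℕ → Fin d → ℚ) (r : ℕ → ℚ), 0 < n ∧ (∀ i, 0 < r i) ∧ (∀ i, r i ≤ 4 * ε) ∧
      x ∈ Metric.ball (ratPoint (C 0)) (r 0 : ℝ) ∧
      (∀ i, i + 2 = n → closure (Metric.ball (ratPoint (C i)) (r i : ℝ)) ⊆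
        Metric.ball (ratPoint (C (i + 1))) (r (i + 1) : ℝ)) ∧
      ZcondPath ω fun i : Fin n => Metric.ball (ratPoint (C i)) (r i : ℝ) := by
  have hε' : (0 : ℝ) < ε := by exact_mod_cast hε
  set f := evalAt ω.1 with hf_def
  have hf : Continuous f := continuous_evalAt_s17 ω.1
  choose v hv using fun z : Ed d => denseRange_ratPoint.exists_dist_lt z (half_pos hε')
  let t : ℕ → ℝ := fun i => Nat.rec (motive := fun _ => ℝ) 0
    (fun _ s => escTime f (Metric.ball (ratPoint (v (f s))) ε) s) i
  let C : ℕ → Fin d → ℚ := fun i => v (f (t i))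
  let A : ℕ → Set (Ed d) := fun i => Metric.ball (ratPoint (C i)) ε
  have htau : ∀ i, tauSeq f A i = t i := by
    intro i
    induction i with
    | zero => rfl
    | succ i ih => rw [tauSeq, ih]
  have hC : ∀ i, dist (f (tauSeq f A i)) (ratPoint (C i)) < ε / 2 := fun i => by
    rw [htau]
    exact hv _
  have hA : ∀ i, IsOpen (A i) := fun i => Metric.isOpen_ball
  have hmem : ∀ i, f (tauSeq f A i) ∈ A i := fun i =>
    Metric.mem_ball.2 ((hC i).trans (half_lt_self hε'))
  have hex : ∃ n, tauSeq f A n = 1 := by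
    refine exists_tauSeq_eq_one hf hA (half_pos hε') fun i => Metric.ball_subset_ball' ?_
    linarith [hC i]
  classical
  set n := Nat.find hex
  have hn1 : tauSeq f A n = 1 := Nat.find_spec hex
  have hlt1 : ∀ i < n, tauSeq f A i < 1 := by
    intro i hi
    refine lt_of_le_of_ne ?_ (Nat.find_min hex hi)
    rcases i with _ | i
    · exact zero_le_one
    · exact escTime_le_one _ _ _
  obtain ⟨m, hm⟩ : ∃ m, n = m + 1 := Nat.exists_eq_succ_of_ne_zero fun h => by
    rw [h] at hn1
    exact zero_ne_one hn1
  let r : ℕ → ℚ := fun i => if i < m then ε else 4 * ε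
  have hr : ∀ i, ε ≤ r i ∧ r i ≤ 4 * ε := fun i => by
    dsimp only [r]
    split_ifs <;> constructor <;> linarith
  have hcongr : ∀ i ≤ m, tauSeq f (fun j => Metric.ball (ratPoint (C j)) (r j : ℝ)) i =
      tauSeq f A i := fun i hi => tauSeq_congr f fun j hj => by
    simp only [A, r, if_pos (show j < m by omega)]
  have hlast : tauSeq f (fun j => Metric.ball (ratPoint (C j)) (r j : ℝ)) (m + 1) = 1 := by
    refine le_antisymm (escTime_le_one _ _ _) ?_
    rw [tauSeq, hcongr m le_rfl, ← hn1, hm]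
    refine escTime_mono (hlt1 m (by omega)).le (hmem m) (Metric.ball_subset_ball ?_)
    exact_mod_cast (hr m).1
  refine ⟨n, C, r, by omega, fun i => hε.trans_le (hr i).1, fun i => (hr i).2, ?_, ?_, ?_⟩
  · have h := hC 0
    rw [tauSeq, hf_def, evalAt_zero, ω.2.1] at h
    have : (ε : ℝ) ≤ r 0 := by exact_mod_cast (hr 0).1
    rw [Metric.mem_ball]
    linarith
  · intro i hi
    obtain rfl : m = i + 1 := by omega
    refine Metric.closure_ball_subset_closedBall.trans (Metric.closedBall_subset_ball' ?_)
    have h1 : f (tauSeq f A (i + 1)) ∈ Metric.closedBall (ratPoint (C i)) ε :=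
      Metric.closure_ball_subset_closedBall (mem_closure_of_le_escTime hf (hA i)
        (hlt1 i (by omega)) (hmem i) ⟨le_escTime (hlt1 i (by omega)).le, le_rfl⟩)
    have h2 := dist_triangle_left (ratPoint (C i)) (ratPoint (C (i + 1)))
      (f (tauSeq f A (i + 1)))
    have h3 := hC (i + 1)
    rw [Metric.mem_closedBall] at h1
    simp only [r, lt_add_iff_pos_right, zero_lt_one, if_true, lt_irrefl, if_false]
    push_cast
    linarith
  · refine (ZcondPath_iff ω (fun i => Metric.ball (ratPoint (C i)) (r i : ℝ)) n).2 ?_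
    refine ⟨fun i _ hi => ?_, by rw [hm]; exact hlast⟩
    rcases Nat.lt_or_ge i m with h | h
    · rw [hcongr i h.le, hcongr (i + 1) h]
      exact lt_escTime_of_mem hf (hA i) (hlt1 i hi) (hmem i)
    · obtain rfl : i = m := by omega
      rw [hlast, hcongr i le_rfl]
      exact hlt1 i hi

lemma countable_ZballRatColl {x y : Ed d} {Q : Type*} [MetricSpace Q] (pr : Omega2 x y → Q) :
    (ZballRatColl pr).Countable := by
  refine (Set.countable_range fun p : (Σ n : ℕ, (Fin n → Fin d → ℚ) × (Fin n → ℚ)) =>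
    closure (Zset pr fun i => Metric.ball (ratPoint (p.2.1 i)) (p.2.2 i : ℝ))).mono ?_
  rintro _ ⟨n, _, c, r, _, rfl⟩
  exact ⟨⟨n, c, r⟩, rfl⟩

/-- The closures of `Z`-sets of rational balls form a network of neighborhoods: every
neighborhood of a geometric path contains such a set through that path. -/
lemma exists_mem_ZballRatColl_subset {x y : Ed d} {Q : Type*} [MetricSpace Q]
    {pr : Omega2 x y → Q} (hsurj : Function.Surjective pr)
    (hdist : ∀ ω ω' : Omega2 x y, dist (pr ω) (pr ω') = quotDist ω.1 ω'.1)
    {q : Q} {U : Set Q} (hU : U ∈ 𝓝 q) : ∃ S ∈ ZballRatColl pr, q ∈ S ∧ S ⊆ U := by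
  obtain ⟨δ, hδ, hball⟩ := Metric.nhds_basis_closedBall.mem_iff.1 hU
  obtain ⟨ω, rfl⟩ := hsurj q
  obtain ⟨ε, hε, hεδ⟩ := exists_rat_btwn (show (0 : ℝ) < δ / 8 by linarith)
  obtain ⟨n, C, r, hn, hr, hrε, hx, hlast, hZ⟩ :=
    exists_rat_balls_ZcondPath ω (ε := ε) (by exact_mod_cast hε)
  refine ⟨closure (Zset pr fun i : Fin n => Metric.ball (ratPoint (C i)) (r i : ℝ)),
    ⟨n, hn, fun i => C i, fun i => r i, fun i => hr i, rfl⟩, subset_closure ⟨ω, rfl, hZ⟩,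
    (closure_minimal ?_ Metric.isClosed_closedBall).trans hball⟩
  rintro _ ⟨ω', rfl, hZ'⟩
  rw [Metric.mem_closedBall, hdist]
  refine quotDist_le_of_ZcondPath (A := fun i => Metric.ball (ratPoint (C i)) (r i : ℝ)) hn
    (fun _ _ => Metric.isOpen_ball) hx hlast (fun i _ z hz w hw => ?_) hZ' hZ
  have hz' := Metric.mem_closedBall.1 (Metric.closure_ball_subset_closedBall hz)
  have hw' := Metric.mem_closedBall.1 (Metric.closure_ball_subset_closedBall hw)
  have hri : (r i : ℝ) ≤ 4 * ε := by exact_mod_cast hrε i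
  linarith [dist_triangle_right z w (ratPoint (C i))]

end ZSets

/-- **Proposition 5.2**: the sets `Z̄(A_1,…,A_n)`, with the `A_i` open balls, generate
the Borel σ-algebra of `Ω̄(x,y)`; the countable subcollection with rational centers and
radii already generates it, every open subset of `Ω̄(x,y)` being a countable union of
such sets.  (Here `Ω̄(x,y)` is realized as any metric space `Q` with a surjection
`pr : Ω(x,y) → Q` inducing the reparametrization pseudo-distance `d̄`.) -/
theorem Zbar_generates_borel (d : ℕ) (hd : 1 ≤ d)
    (x y : Ed d) (hxy : x ≠ y)
    (Q : Type) [MetricSpace Q] (pr : Omega2 x y → Q)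
    (hsurj : Function.Surjective pr)
    (hdist : ∀ ω ω' : Omega2 x y, dist (pr ω) (pr ω') = quotDist ω.1 ω'.1) :
    MeasurableSpace.generateFrom (ZballColl pr) = borel Q ∧
    MeasurableSpace.generateFrom (ZballRatColl pr) = borel Q ∧
    ∀ U : Set Q, IsOpen U →
      ∃ C : Set (Set Q), C.Countable ∧ C ⊆ ZballRatColl pr ∧ ⋃₀ C = U := by
  have hcover : ∀ U : Set Q, IsOpen U →
      ∃ C : Set (Set Q), C.Countable ∧ C ⊆ ZballRatColl pr ∧ ⋃₀ C = U := by
    intro U hU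
    refine ⟨{S ∈ ZballRatColl pr | S ⊆ U}, (countable_ZballRatColl pr).mono fun S hS => hS.1,
      fun S hS => hS.1, Set.Subset.antisymm (Set.sUnion_subset fun S hS => hS.2) fun q hq => ?_⟩
    obtain ⟨S, hS, hqS, hSU⟩ := exists_mem_ZballRatColl_subset hsurj hdist (hU.mem_nhds hq)
    exact ⟨S, ⟨hS, hSU⟩, hqS⟩
  have hle : MeasurableSpace.generateFrom (ZballColl pr) ≤ borel Q := by
    refine MeasurableSpace.generateFrom_le ?_
    rintro _ ⟨n, _, c, r, _, rfl⟩
    borelize Q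
    exact isClosed_closure.measurableSet
  have hsub : ZballRatColl pr ⊆ ZballColl pr := by
    rintro _ ⟨n, hn, c, r, hr, rfl⟩
    exact ⟨n, hn, _, fun i => (r i : ℝ), fun i => Rat.cast_pos.2 (hr i), rfl⟩
  have hmono := MeasurableSpace.generateFrom_mono hsub
  have hge : borel Q ≤ MeasurableSpace.generateFrom (ZballRatColl pr) := by
    refine MeasurableSpace.generateFrom_le fun U hU => ?_
    obtain ⟨C, hC, hCsub, rfl⟩ := hcover U hU
    exact MeasurableSet.sUnion hC fun S hS => MeasurableSpace.measurableSet_generateFrom (hCsub hS)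
  exact ⟨le_antisymm hle (hge.trans hmono), le_antisymm (hmono.trans hle) hge, hcover⟩

end
end

section
/- Fix an integer d ≥ 1 and x, y ∈ ℝ^d. The space Ω̄(x,y) of geometric (unparametrized) paths from x to y, with the metric induced by d̄, is a complete separable metric space. -/
open MeasureTheory Filter Topology Real Set
open scoped RealInnerProductSpace ENNReal unitInterval

noncomputable section

theorem quotDist_le_dist_comp {d : ℕ} (ω ω' : PathSp d) (φ : I ≃ₜ I) (hφ : Monotone φ) :
    quotDist ω ω' ≤ dist ω (ω'.comp ⟨φ, φ.continuous⟩) :=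
  ciInf_le (f := fun φ : {φ : I ≃ₜ I // Monotone ⇑φ} => dist ω (ω'.comp ⟨⇑φ.1, φ.1.continuous⟩))
    ⟨0, by rintro _ ⟨ψ, rfl⟩; exact dist_nonneg⟩ ⟨φ, hφ⟩

theorem quotDist_le_dist {d : ℕ} (ω ω' : PathSp d) : quotDist ω ω' ≤ dist ω ω' :=
  quotDist_le_dist_comp ω ω' (Homeomorph.refl I) monotone_id

/-- Reparametrization of a path from `x` to `y` by an increasing homeomorphism of `[0,1]`. -/
def Omega2.reparam {d : ℕ} {x y : Ed d} (ω : Omega2 x y) (φ : I ≃ₜ I) (hφ : Monotone φ) :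
    Omega2 x y :=
  ⟨ω.1.comp ⟨φ, φ.continuous⟩, by
    have h0 : φ 0 = 0 :=
      le_antisymm ((hφ (unitInterval.nonneg' (t := φ.symm 0))).trans_eq (φ.apply_symm_apply 0))
        unitInterval.nonneg'
    simp [h0, ω.2.1], by
    have h1 : φ 1 = 1 :=
      le_antisymm unitInterval.le_one'
        ((φ.apply_symm_apply 1).symm.trans_le (hφ (unitInterval.le_one' (t := φ.symm 1))))
    simp [h1, ω.2.2]⟩

theorem Omega2.isClosed {d : ℕ} (x y : Ed d) :
    IsClosed {ω : PathSp d | ω 0 = x ∧ ω 1 = y} :=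
  (isClosed_eq (by fun_prop) continuous_const).inter (isClosed_eq (by fun_prop) continuous_const)

section

variable {d : ℕ} {x y : Ed d} {Q : Type*} [MetricSpace Q] {pr : Omega2 x y → Q}

theorem lipschitzWith_of_dist_eq_quotDist
    (hdist : ∀ ω ω' : Omega2 x y, dist (pr ω) (pr ω') = quotDist ω.1 ω'.1) :
    LipschitzWith 1 pr :=
  LipschitzWith.of_dist_le_mul fun ω ω' => by
    rw [hdist, NNReal.coe_one, one_mul]
    exact quotDist_le_dist ω.1 ω'.1

/-- Every parametrization of a geometric path lifts to a nearby parametrization of any nearby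
geometric path. -/
theorem exists_lift_dist_lt (hsurj : Function.Surjective pr)
    (hdist : ∀ ω ω' : Omega2 x y, dist (pr ω) (pr ω') = quotDist ω.1 ω'.1)
    (ω : Omega2 x y) {q : Q} {r : ℝ} (h : dist (pr ω) q < r) :
    ∃ ω' : Omega2 x y, pr ω' = q ∧ dist ω ω' < r := by
  obtain ⟨ω₁, rfl⟩ := hsurj q
  rw [hdist] at h
  have : Nonempty {φ : I ≃ₜ I // Monotone ⇑φ} := ⟨⟨Homeomorph.refl I, monotone_id⟩⟩
  obtain ⟨⟨φ, hφ⟩, hlt⟩ := exists_lt_of_ciInf_lt h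
  refine ⟨ω₁.reparam φ hφ, dist_le_zero.1 ?_, hlt⟩
  rw [hdist]
  exact (quotDist_le_dist_comp _ _ φ hφ).trans_eq (dist_self _)

theorem completeSpace_of_dist_eq_quotDist (hsurj : Function.Surjective pr)
    (hdist : ∀ ω ω' : Omega2 x y, dist (pr ω) (pr ω') = quotDist ω.1 ω'.1) :
    CompleteSpace Q := by
  have : CompleteSpace (Omega2 x y) := (Omega2.isClosed x y).completeSpace_coe
  refine Metric.complete_of_convergent_controlled_sequences (fun n => (1 / 2 : ℝ) ^ n)
    (fun n => by positivity) fun u hu => ?_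
  have hstep (n : ℕ) (ω : {ω : Omega2 x y // pr ω = u n}) :
      ∃ ω' : {ω' : Omega2 x y // pr ω' = u (n + 1)}, dist ω.1 ω'.1 < (1 / 2 : ℝ) ^ n := by
    obtain ⟨ω', hω', hlt⟩ := exists_lift_dist_lt hsurj hdist ω.1 (q := u (n + 1))
      (by rw [ω.2]; exact hu n n (n + 1) le_rfl n.le_succ)
    exact ⟨⟨ω', hω'⟩, hlt⟩
  choose next hnext using hstep
  obtain ⟨ω₀, hω₀⟩ := hsurj (u 0)
  let η : ∀ n, {ω : Omega2 x y // pr ω = u n} := fun n => Nat.rec ⟨ω₀, hω₀⟩ next n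
  have hη : CauchySeq fun n => (η n).1 :=
    cauchySeq_of_le_geometric (1 / 2) 1 (by norm_num) fun n => by
      simpa using (hnext n (η n)).le
  obtain ⟨ω, hω⟩ := cauchySeq_tendsto_of_complete hη
  refine ⟨pr ω, ?_⟩
  simpa only [Function.comp_def, (η _).2] using
    ((lipschitzWith_of_dist_eq_quotDist hdist).continuous.tendsto ω).comp hω

theorem separableSpace_of_dist_eq_quotDist (hsurj : Function.Surjective pr)
    (hdist : ∀ ω ω' : Omega2 x y, dist (pr ω) (pr ω') = quotDist ω.1 ω'.1) :
    TopologicalSpace.SeparableSpace Q :=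
  hsurj.denseRange.separableSpace (lipschitzWith_of_dist_eq_quotDist hdist).continuous

end

/-- `Ω̄(x,y)`, the space of geometric (unparametrized) paths from `x` to `y` with the
metric induced by the reparametrization pseudo-distance `d̄`, is a complete separable
metric space.  (Here `Ω̄(x,y)` is realized as any metric space `Q` with a surjection
`pr : Ω(x,y) → Q` inducing `d̄`.) -/
theorem geomPathSpace_complete_separable (d : ℕ) (hd : 1 ≤ d) (x y : Ed d)
    (Q : Type) [MetricSpace Q] (pr : Omega2 x y → Q)
    (hsurj : Function.Surjective pr)
    (hdist : ∀ ω ω' : Omega2 x y, dist (pr ω) (pr ω') = quotDist ω.1 ω'.1) :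
    CompleteSpace Q ∧ TopologicalSpace.SeparableSpace Q := by
  exact ⟨completeSpace_of_dist_eq_quotDist hsurj hdist,
    separableSpace_of_dist_eq_quotDist hsurj hdist⟩

end
end
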